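/- arXiv:2312.08930 — 5 statements merged into one kernel-verified Lean document; each statement's English description precedes it below -/
import Mathlib

section
/- Let Γ be a connected finite simple graph on n vertices and R an equivalence relation on its vertex set with k ≥ 3 distinct R-equivalence classes C₁, …, C_k of sizes n₁, …, n_k. Let ρ_{ij} = 1 if C_i and C_j are adjacent in the R-compressed graph of Γ and ρ_{ij} = 0 otherwise, and let N(0) be the k × k symmetric real matrix with (i,i)-entry n_i − 1 and (i,j)-entry √(n_i n_j)·ρ_{ij} for i ≠ j. Then the characteristic polynomial of the adjacency matrix of the R-super graph Γ^R satisfies χ(A(Γ^R), x) = χ(N(0), x) · (x + 1)^{n − k}. -/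
/-!
The super graph is obtained from the compressed graph by replacing each class with a clique, so
`A(Γ^R) + 1 = E T Eᵀ`, where `T` is the adjacency matrix of the compressed graph plus `1` and `E`
is the vertex-class incidence matrix. As `Eᵀ E = D` is the diagonal matrix of class sizes,
exchanging factors gives `χ(E T Eᵀ) = x ^ (n - k) χ(D T)` and `χ(D T) = χ(√D T √D)`. Now
`√D T √D = N(0) + 1`, and replacing `x` by `x + 1` removes the two shifts by the identity.
-/

open Polynomial

noncomputable section
open scoped Classical

/-- The adjacency matrix (over ℝ) of a finite simple graph. -/
def adjMat {V : Type*} [Fintype V] (Γ : SimpleGraph V) : Matrix V V ℝ :=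
  fun u v => if Γ.Adj u v then 1 else 0

/-- The Laplacian matrix `D − A` of a finite simple graph, where `D` is the diagonal
matrix of vertex degrees. -/
def lapMat {V : Type*} [Fintype V] (Γ : SimpleGraph V) : Matrix V V ℝ :=
  Matrix.diagonal (fun v => ((Finset.univ.filter fun u => Γ.Adj v u).card : ℝ)) - adjMat Γ

/-- The `R`-super graph of `Γ`: two distinct vertices are adjacent iff they are
`R`-equivalent or some members of their respective `R`-classes are adjacent in `Γ`. -/
def superGraph {V : Type*} (Γ : SimpleGraph V) (R : Setoid V) : SimpleGraph V :=
  SimpleGraph.fromRel fun u v =>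
    R.r u v ∨ ∃ u' v', R.r u u' ∧ R.r v v' ∧ Γ.Adj u' v'

/-- The `R`-compressed graph of `Γ`, on the set of `R`-classes: two distinct classes are
adjacent iff some vertex of one is adjacent in `Γ` to some vertex of the other. -/
def compressedGraph {V : Type*} (Γ : SimpleGraph V) (R : Setoid V) :
    SimpleGraph (Quotient R) :=
  SimpleGraph.fromRel fun c d => ∃ x y, Quotient.mk R x = c ∧ Quotient.mk R y = d ∧ Γ.Adj x y

/-- The generalized join `I[K_{n i}]` of complete graphs along the graph `I`:
the vertex `i` of `I` is replaced by the complete graph on `Fin (n i)`, and all edges are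
put between the `i`-th and `j`-th complete graphs whenever `i` and `j` are adjacent in `I`. -/
def genJoinK {ι : Type*} (I : SimpleGraph ι) (n : ι → ℕ) : SimpleGraph (Σ i, Fin (n i)) :=
  SimpleGraph.fromRel fun a b => a.1 = b.1 ∨ I.Adj a.1 b.1

/-- The star graph `K_{1,k-1}` on `Fin k`, whose central vertex is the one with value `0`. -/
def starGraph (k : ℕ) : SimpleGraph (Fin k) :=
  SimpleGraph.fromRel fun a _b => a.val = 0

/-- The order super commuting graph `Δ^o(G)`: distinct `x, y` are adjacent iff
`o(x) = o(y)` or some distinct commuting `x', y'` satisfy `o(x') = o(x)` and `o(y') = o(y)`. -/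
def orderSuper (G : Type*) [Group G] : SimpleGraph G :=
  SimpleGraph.fromRel fun x y =>
    orderOf x = orderOf y ∨
      ∃ x' y' : G, x' ≠ y' ∧ x' * y' = y' * x' ∧ orderOf x' = orderOf x ∧ orderOf y' = orderOf y

/-- The conjugacy super commuting graph `Δ^c(G)`: distinct `x, y` are adjacent iff
`x` is conjugate to `y` or some distinct commuting `x', y'` are conjugate to `x` and `y`
respectively. -/
def conjSuper (G : Type*) [Group G] : SimpleGraph G :=
  SimpleGraph.fromRel fun x y =>
    IsConj x y ∨ ∃ x' y' : G, x' ≠ y' ∧ x' * y' = y' * x' ∧ IsConj x x' ∧ IsConj y y'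

open Matrix

section Submatrix

variable {V W ι κ α : Type*}

lemma submatrix_eq_one_submatrix_mul_mul [Fintype ι] [Fintype κ] [DecidableEq ι] [DecidableEq κ]
    [NonAssocSemiring α] (T : Matrix ι κ α) (f : V → ι) (g : W → κ) :
    T.submatrix f g =
      (1 : Matrix ι ι α).submatrix f id * T * (1 : Matrix κ κ α).submatrix id g := by
  have hleft := one_submatrix_mul f (Equiv.refl ι) T
  have hright := mul_submatrix_one (Equiv.refl κ) g (T.submatrix f id)
  simp only [Equiv.coe_refl, Equiv.refl_symm, Function.id_comp] at hleft hright
  rw [hleft, hright, submatrix_submatrix, Function.comp_id, Function.id_comp]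

lemma one_submatrix_mul_one_submatrix_eq_diagonal_card [Fintype V] [DecidableEq ι]
    [NonAssocSemiring α] (c : V → ι) :
    (1 : Matrix ι ι α).submatrix id c * (1 : Matrix ι ι α).submatrix c id =
      diagonal fun i => ((Finset.univ.filter fun v => c v = i).card : α) := by
  ext i j
  rcases eq_or_ne i j with rfl | hij
  · simp [mul_apply, one_apply, ← ite_and, eq_comm (a := i)]
  · rw [diagonal_apply_ne _ hij, mul_apply]
    refine Finset.sum_eq_zero fun v _ => ?_
    by_cases hv : c v = j
    · simp [hv, hij]
    · simp [hv]

variable [Fintype V] [DecidableEq V] [Fintype ι] [DecidableEq ι] [CommRing α]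

lemma charpoly_submatrix_of_surjective (T : Matrix ι ι α) {c : V → ι}
    (hc : Function.Surjective c) :
    (T.submatrix c c).charpoly =
      X ^ (Fintype.card V - Fintype.card ι) *
        (diagonal (fun i => ((Finset.univ.filter fun v => c v = i).card : α)) * T).charpoly := by
  rw [submatrix_eq_one_submatrix_mul_mul, Matrix.mul_assoc,
    charpoly_mul_comm_of_le _ _ (Fintype.card_le_of_surjective c hc), Matrix.mul_assoc,
    one_submatrix_mul_one_submatrix_eq_diagonal_card, charpoly_mul_comm]

lemma charpoly_eq_charpoly_add_one_comp (M : Matrix ι ι α) :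
    M.charpoly = (M + 1).charpoly.comp (X + 1) := by
  rw [← C_1, ← charpoly_sub_scalar, map_one, add_sub_cancel_right]

end Submatrix

section CliqueBlowup

variable {V ι : Type*}

/-- The blow-up of the graph `I` along `c : V → ι`: each vertex `i` of `I` is replaced by a clique
on the fibre of `c` over `i`, and two cliques are completely joined when their base vertices are
adjacent in `I`. -/
def cliqueBlowup (I : SimpleGraph ι) (c : V → ι) : SimpleGraph V where
  Adj u v := u ≠ v ∧ (c u = c v ∨ I.Adj (c u) (c v))
  symm := ⟨fun _ _ h => ⟨h.1.symm, h.2.imp Eq.symm SimpleGraph.Adj.symm⟩⟩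
  loopless := ⟨fun _ h => h.1 rfl⟩

lemma cliqueBlowup_comap {κ : Type*} (I : SimpleGraph κ) (c : V → ι) {f : ι → κ}
    (hf : Function.Injective f) : cliqueBlowup (I.comap f) c = cliqueBlowup I (f ∘ c) := by
  ext u v
  simp [cliqueBlowup, hf.eq_iff]

lemma superGraph_eq_cliqueBlowup (Γ : SimpleGraph V) (R : Setoid V) :
    superGraph Γ R = cliqueBlowup (compressedGraph Γ R) (Quotient.mk R) := by
  ext u v
  have class_eq (a b : V) : Quotient.mk R a = Quotient.mk R b ↔ R.r b a :=
    eq_comm.trans Quotient.eq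
  have symm_iff : R.r v u ↔ R.r u v := ⟨R.symm, R.symm⟩
  simp only [superGraph, compressedGraph, cliqueBlowup, SimpleGraph.fromRel_adj, class_eq,
    symm_iff, ne_eq]
  tauto

variable [Fintype ι] [DecidableEq ι]

lemma adjMat_cliqueBlowup_add_one [Fintype V] [DecidableEq V] (I : SimpleGraph ι) (c : V → ι) :
    adjMat (cliqueBlowup I c) + 1 = (adjMat I + 1).submatrix c c := by
  ext u v
  by_cases huv : u = v
  · simp [adjMat, huv]
  · by_cases hc : c u = c v <;> simp [adjMat, cliqueBlowup, one_apply, huv, hc]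

/-- The symmetrized quotient matrix of a blow-up of `I` with cliques of sizes `n i`. It is the
matrix `N(0)` when `I` is the compressed graph and `n` gives the class sizes. -/
def symmQuotientMatrix (I : SimpleGraph ι) (n : ι → ℕ) : Matrix ι ι ℝ :=
  Matrix.of fun i j =>
    if i = j then (n i : ℝ) - 1 else if I.Adj i j then √((n i : ℝ) * (n j : ℝ)) else 0

lemma symmQuotientMatrix_add_one (I : SimpleGraph ι) (n : ι → ℕ) :
    symmQuotientMatrix I n + 1 =
      diagonal (fun i => √(n i : ℝ)) * (adjMat I + 1) * diagonal (fun i => √(n i : ℝ)) := by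
  ext i j
  rcases eq_or_ne i j with rfl | hij
  · simp [symmQuotientMatrix, adjMat]
  · simp [symmQuotientMatrix, adjMat, hij]

lemma charpoly_symmQuotientMatrix_add_one (I : SimpleGraph ι) (n : ι → ℕ) :
    (symmQuotientMatrix I n + 1).charpoly =
      (diagonal (fun i => (n i : ℝ)) * (adjMat I + 1)).charpoly := by
  rw [symmQuotientMatrix_add_one, charpoly_mul_comm, ← Matrix.mul_assoc, diagonal_mul_diagonal]
  simp only [Real.mul_self_sqrt (Nat.cast_nonneg _)]

theorem charpoly_adjMat_cliqueBlowup [Fintype V] [DecidableEq V] (I : SimpleGraph ι) {c : V → ι}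
    (hc : Function.Surjective c) :
    (adjMat (cliqueBlowup I c)).charpoly =
      (symmQuotientMatrix I fun i => (Finset.univ.filter fun v => c v = i).card).charpoly *
        (X + 1) ^ (Fintype.card V - Fintype.card ι) := by
  rw [charpoly_eq_charpoly_add_one_comp, adjMat_cliqueBlowup_add_one,
    charpoly_submatrix_of_surjective _ hc, mul_comp, X_pow_comp,
    ← charpoly_symmQuotientMatrix_add_one, ← charpoly_eq_charpoly_add_one_comp, mul_comm]

end CliqueBlowup

theorem stmt_3_general {V ι : Type*} [Fintype V] [Fintype ι] [DecidableEq ι] (Γ : SimpleGraph V)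
    (R : Setoid V) (e : ι ≃ Quotient R) (n : ι → ℕ)
    (hn : ∀ i, n i = (Finset.univ.filter fun x => Quotient.mk R x = e i).card) :
    (adjMat (superGraph Γ R)).charpoly =
      (Matrix.of fun i j : ι =>
          if i = j then (n i : ℝ) - 1
          else if (compressedGraph Γ R).Adj (e i) (e j) then
            √((n i : ℝ) * (n j : ℝ))
          else 0).charpoly *
        (X + 1) ^ (Fintype.card V - Fintype.card ι) := by
  let c : V → ι := e.symm ∘ Quotient.mk R
  have hc : Function.Surjective c := e.symm.surjective.comp Quotient.mk_surjective
  have hec : e ∘ c = Quotient.mk R := by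
    rw [← Function.comp_assoc, e.self_comp_symm, Function.id_comp]
  have hblowup : superGraph Γ R = cliqueBlowup ((compressedGraph Γ R).comap e) c := by
    rw [cliqueBlowup_comap _ _ e.injective, hec, superGraph_eq_cliqueBlowup]
  have hcard : n = fun i => (Finset.univ.filter fun v => c v = i).card := by
    ext i
    simp only [hn, c, Function.comp_apply, Equiv.symm_apply_eq]
  rw [hblowup, charpoly_adjMat_cliqueBlowup _ hc, ← hcard]
  rfl

/-- Adjacency characteristic polynomial of the `R`-super graph of a connected graph `Γ`:
`χ(A(Γ^R), x) = χ(N(0), x) · (x + 1)^(n − k)`, where the `R`-classes are enumerated by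
`e : Fin k ≃ Quotient R`, `n i` is the size of the `i`-th class, and `N(0)` has diagonal
entries `n i − 1` and off-diagonal entries `√(n i · n j) · ρ_{ij}`. -/
theorem stmt_3 {V : Type*} [Fintype V] (Γ : SimpleGraph V) (R : Setoid V)
    (hconn : Γ.Connected) (k : ℕ) (hk : 3 ≤ k) (e : Fin k ≃ Quotient R)
    (n : Fin k → ℕ)
    (hn : ∀ i, n i = (Finset.univ.filter fun x => Quotient.mk R x = e i).card) :
    (adjMat (superGraph Γ R)).charpoly =
      (Matrix.of fun i j : Fin k =>
          if i = j then (n i : ℝ) - 1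
          else if (compressedGraph Γ R).Adj (e i) (e j) then
            Real.sqrt ((n i : ℝ) * (n j : ℝ))
          else 0).charpoly *
        (X + 1) ^ (Fintype.card V - k) := by
  simpa only [Fintype.card_fin] using stmt_3_general Γ R e n hn
end
end

section
/- Let k ≥ 3 and let Γ be the generalized join K_{1,k−1}[K_l, K_m, …, K_m], where the star K_{1,k−1} has central vertex replaced by K_l and the k − 1 pendant vertices each replaced by K_m. Then the eigenvalues of the adjacency matrix of Γ are: (m + l − 2 − √(m² + l² + (4k−6)ml))/2 with multiplicity 1, −1 with multiplicity m(k−1) + l − k, m − 1 with multiplicity k − 2, and (m + l − 2 + √(m² + l² + (4k−6)ml))/2 with multiplicity 1. -/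
open Polynomial

noncomputable section
open scoped Classical

/-!
If `A` is the adjacency matrix of the generalized join along `I`, then `A + 1` is obtained from
`B = adjMat I + 1` by repeating its `i`-th row and column `n i` times. By Sylvester's identity
(`P * Q` and `Q * P` have the same characteristic polynomial up to a power of `X`), the
characteristic polynomial of `A + 1` is, up to a power of `X`, that of the quotient matrix
`diagonal n * B`. For a star the quotient is an arrowhead matrix, whose characteristic polynomial
is explicit; when all the pendant blocks have `m` vertices, it is a power of `X - m` times a
quadratic.
-/

theorem X_sub_C_mul_X_sub_C_sub_C_of_add_eq_of_mul_eq {R : Type*} [CommRing R] {a b c u v : R}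
    (hadd : u + v = a + b) (hmul : u * v = a * b - c) :
    (X - C a) * (X - C b) - C c = (X - C u) * (X - C v) := by
  have hadd' : C u + C v = C a + C b := by rw [← C_add, hadd, C_add]
  have hmul' : C u * C v = C a * C b - C c := by rw [← C_mul, hmul, C_sub, C_mul]
  linear_combination X * hadd' - hmul'

theorem X_sub_C_comp_X_add_one {R : Type*} [CommRing R] (a : R) :
    (X - C a).comp (X + 1) = X - C (a - 1) := by
  simp only [sub_comp, X_comp, C_comp, C_sub, C_1]
  ring

section Matrix

open Matrix Finset

variable {R ι α : Type*} [CommRing R] [Fintype ι] [DecidableEq ι]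

theorem X_pow_mul_charpoly_submatrix [Fintype α] [DecidableEq α] (B : Matrix ι ι R) (f : α → ι) :
    X ^ Fintype.card ι * (B.submatrix f f).charpoly =
      X ^ Fintype.card α * (diagonal (fun i => (#{v | f v = i} : R)) * B).charpoly := by
  let E : Matrix ι α R := (1 : Matrix ι ι R).submatrix id f
  have hBE : B.submatrix f id * E = B.submatrix f f := by
    simp [E, ← submatrix_mul _ _ _ _ _ Function.bijective_id]
  have hEB : E * B.submatrix f id = diagonal (fun i => (#{v | f v = i} : R)) * B := by
    ext i j
    have hsum : ∑ v with f v = i, B (f v) j = ∑ v with f v = i, B i j :=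
      sum_congr rfl fun v hv => by rw [(mem_filter.mp hv).2]
    simp [E, mul_apply (M := submatrix _ _ _), one_apply, eq_comm (a := i), ← Finset.sum_filter,
      hsum]
  rw [← hBE, ← hEB, charpoly_mul_comm']

theorem det_fromBlocks_replicateCol_replicateRow (D : Matrix ι ι R) (c r : ι → R) (a : R)
    (hD : IsRegular D.det) :
    (fromBlocks D (replicateCol Unit c) (replicateRow Unit r) (diagonal fun _ => a)).det =
      a * D.det - r ⬝ᵥ D.adjugate *ᵥ c := by
  -- Column operations by `T` clear the border column, at the cost of a factor `D.det`.
  let T : Matrix (ι ⊕ Unit) (ι ⊕ Unit) R :=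
    fromBlocks 1 (replicateCol Unit (-(D.adjugate *ᵥ c))) 0 (diagonal fun _ => D.det)
  have hT : T.det = D.det := by simp [T]
  have hmul : fromBlocks D (replicateCol Unit c) (replicateRow Unit r) (diagonal fun _ => a) * T =
      fromBlocks D 0 (replicateRow Unit r)
        (diagonal fun _ => a * D.det - r ⬝ᵥ D.adjugate *ᵥ c) := by
    rw [fromBlocks_multiply]
    congr 1
    · simp
    · ext i j
      simp [← replicateCol_mulVec, mulVec_neg, mulVec_mulVec, mul_adjugate, smul_mulVec, mul_comm]
    · simp
    · ext i j
      simp [mul_apply, dotProduct, sub_eq_neg_add]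
  apply hD.right
  simpa [hT, mul_comm] using congrArg det hmul

theorem charpoly_arrowhead {p : ℕ} (M : Matrix (Fin (p + 1)) (Fin (p + 1)) R)
    (hM : ∀ i j : Fin p, i ≠ j → M i.succ j.succ = 0) :
    M.charpoly = (X - C (M 0 0)) * ∏ i : Fin p, (X - C (M i.succ i.succ)) -
      ∑ i : Fin p, C (M 0 i.succ * M i.succ 0) *
        ∏ j ∈ univ.erase i, (X - C (M j.succ j.succ)) := by
  let e : Fin (p + 1) ≃ Fin p ⊕ Unit := (finSuccEquiv p).trans (Equiv.optionEquivSumPUnit _)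
  let d : Fin p → R[X] := fun i => X - C (M i.succ i.succ)
  have hreindex : M.charmatrix.reindex e e =
      fromBlocks (diagonal d) (replicateCol Unit fun i => -C (M i.succ 0))
        (replicateRow Unit fun i => -C (M 0 i.succ)) (diagonal fun _ => X - C (M 0 0)) := by
    ext1 (i | i) (j | j)
    · by_cases hij : i = j <;> simp [e, d, hij, hM i j]
    all_goals simp [e, charmatrix_apply_ne, (Fin.succ_ne_zero _).symm]
  have hd : IsRegular (diagonal d).det := by
    rw [det_diagonal]
    exact (monic_prod_of_monic _ _ fun i _ => monic_X_sub_C _).isRegular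
  rw [charpoly, ← det_reindex_self e, hreindex,
    det_fromBlocks_replicateCol_replicateRow _ _ _ _ hd, det_diagonal, adjugate_diagonal]
  simp only [dotProduct, mulVec_diagonal, d, C_mul]
  congr 1
  exact sum_congr rfl fun i _ => by ring

end Matrix

section Join

open Finset

/-- The quotient matrix of `A + 1` by the partition of `genJoinK I n` into its blocks, where `A` is
the adjacency matrix. It is indexed by `ι` and keeps a row and a column for every empty block. Its
`(i, j)` entry is the size of block `i`, not `j`, which makes it the transpose of the usual
equitable quotient. -/
def genJoinKQuotient {ι : Type*} [Fintype ι] [DecidableEq ι] (I : SimpleGraph ι) (n : ι → ℕ) :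
    Matrix ι ι ℝ :=
  Matrix.diagonal (fun i => (n i : ℝ)) * (adjMat I + 1)

variable {ι : Type*} [Fintype ι] [DecidableEq ι]

theorem adjMat_genJoinK (I : SimpleGraph ι) (n : ι → ℕ) :
    adjMat (genJoinK I n) = (adjMat I + 1).submatrix Sigma.fst Sigma.fst - 1 := by
  ext v w
  by_cases hvw : v = w
  · simp [adjMat, hvw]
  · by_cases hfst : v.1 = w.1 <;>
      simp [adjMat, genJoinK, hvw, hfst, Ne.symm, I.adj_comm w.1]

theorem X_add_one_pow_mul_charpoly_adjMat_genJoinK (I : SimpleGraph ι) (n : ι → ℕ) :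
    (X + 1) ^ Fintype.card ι * (adjMat (genJoinK I n)).charpoly =
      (X + 1) ^ (∑ i, n i) * (genJoinKQuotient I n).charpoly.comp (X + 1) := by
  have hfiber (i : ι) : #{v : Σ j, Fin (n j) | v.1 = i} = n i := by
    rw [← Fintype.card_subtype, Fintype.card_congr (Equiv.sigmaSubtype i)]
    simp
  have hsylvester := congrArg (·.comp (X + C 1))
    (X_pow_mul_charpoly_submatrix (adjMat I + 1) (Sigma.fst : (Σ j, Fin (n j)) → ι))
  rw [adjMat_genJoinK, ← map_one (Matrix.scalar (Σ j, Fin (n j))), Matrix.charpoly_sub_scalar]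
  simpa [hfiber, genJoinKQuotient] using hsylvester

theorem charpoly_adjMat_genJoinK_of_card_le (I : SimpleGraph ι) {n : ι → ℕ}
    (hcard : Fintype.card ι ≤ ∑ i, n i) :
    (adjMat (genJoinK I n)).charpoly =
      (X + 1) ^ (∑ i, n i - Fintype.card ι) * (genJoinKQuotient I n).charpoly.comp (X + 1) := by
  have hne : (X + 1 : ℝ[X]) ≠ 0 := X_add_C_ne_zero 1
  apply mul_left_cancel₀ (pow_ne_zero (Fintype.card ι) hne)
  rw [X_add_one_pow_mul_charpoly_adjMat_genJoinK, ← mul_assoc, ← pow_add,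
    Nat.add_sub_cancel' hcard]

theorem charpoly_genJoinKQuotient_starGraph {p : ℕ} (n : Fin (p + 1) → ℕ) :
    (genJoinKQuotient (starGraph (p + 1)) n).charpoly =
      (X - C (n 0 : ℝ)) * ∏ i : Fin p, (X - C (n i.succ : ℝ)) -
        ∑ i : Fin p, C ((n 0 : ℝ) * n i.succ) * ∏ j ∈ univ.erase i, (X - C (n j.succ : ℝ)) := by
  have hcol (i : Fin p) : genJoinKQuotient (starGraph (p + 1)) n i.succ 0 = n i.succ := by
    simp [genJoinKQuotient, adjMat, starGraph]
  have hrow (i : Fin p) : genJoinKQuotient (starGraph (p + 1)) n 0 i.succ = n 0 := by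
    simp [genJoinKQuotient, adjMat, starGraph, (Fin.succ_ne_zero i).symm]
  have hdiag (i : Fin (p + 1)) : genJoinKQuotient (starGraph (p + 1)) n i i = n i := by
    simp [genJoinKQuotient, adjMat]
  rw [charpoly_arrowhead]
  · simp only [hcol, hrow, hdiag]
  · intro i j hij
    simp [genJoinKQuotient, adjMat, starGraph, hij]

variable {q l m : ℕ} {n : Fin (q + 2) → ℕ}

theorem charpoly_genJoinKQuotient_starGraph_of_const (hn₀ : n 0 = l)
    (hn : ∀ i : Fin (q + 1), n i.succ = m) :
    (genJoinKQuotient (starGraph (q + 2)) n).charpoly =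
      (X - C (m : ℝ)) ^ q *
        ((X - C (m : ℝ)) * (X - C (l : ℝ)) - C ((q + 1) * (m * l) : ℝ)) := by
  rw [charpoly_genJoinKQuotient_starGraph]
  simp only [hn₀, hn, prod_const, sum_const, card_univ, card_erase_of_mem, mem_univ,
    Fintype.card_fin, Nat.add_sub_cancel, nsmul_eq_mul, Nat.cast_add, Nat.cast_one, C_mul, C_add,
    C_1, map_natCast]
  ring

theorem charpoly_adjMat_genJoinK_starGraph_of_const (hn₀ : n 0 = l)
    (hn : ∀ i : Fin (q + 1), n i.succ = m) (hcard : q + 2 ≤ m * (q + 1) + l) :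
    (adjMat (genJoinK (starGraph (q + 2)) n)).charpoly =
      (X + 1) ^ (m * (q + 1) + l - (q + 2)) * ((X - C ((m : ℝ) - 1)) ^ q *
        ((X - C ((m : ℝ) - 1)) * (X - C ((l : ℝ) - 1)) - C ((q + 1) * (m * l) : ℝ))) := by
  have horder : ∑ i, n i = m * (q + 1) + l := by
    rw [Fin.sum_univ_succ]
    simp only [hn₀, hn, sum_const, card_univ, Fintype.card_fin, smul_eq_mul]
    ring
  rw [charpoly_adjMat_genJoinK_of_card_le _ (by simpa [horder] using hcard), horder,
    Fintype.card_fin, charpoly_genJoinKQuotient_starGraph_of_const hn₀ hn]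
  simp only [mul_comp, pow_comp, X_sub_C_comp_X_add_one, C_comp,
    sub_comp (p := (X - C (m : ℝ)) * _)]

end Join

/-- Adjacency spectrum of the generalized join `K_{1,k−1}[K_l, K_m, …, K_m]`, where the
central vertex of the star is replaced by `K_l` and each pendant vertex by `K_m`:
the eigenvalues are `(m+l−2 ∓ √(m²+l²+(4k−6)ml))/2` each with multiplicity 1, `−1` with
multiplicity `m(k−1)+l−k`, and `m−1` with multiplicity `k−2`. -/
theorem stmt_6 (k l m : ℕ) (hk : 3 ≤ k) (hl : 1 ≤ l) (hm : 1 ≤ m) :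
    (adjMat (genJoinK (starGraph k) (fun i => if i.val = 0 then l else m))).charpoly =
      (X - C (((m : ℝ) + l - 2 - Real.sqrt ((m : ℝ) ^ 2 + (l : ℝ) ^ 2 +
          (4 * (k : ℝ) - 6) * m * l)) / 2)) *
        (X + 1) ^ (m * (k - 1) + l - k) *
        (X - C ((m : ℝ) - 1)) ^ (k - 2) *
        (X - C (((m : ℝ) + l - 2 + Real.sqrt ((m : ℝ) ^ 2 + (l : ℝ) ^ 2 +
          (4 * (k : ℝ) - 6) * m * l)) / 2)) := by
  obtain ⟨q, rfl⟩ : ∃ q, k = q + 2 := ⟨k - 2, by omega⟩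
  have hcard : q + 2 ≤ m * (q + 1) + l := by nlinarith
  set s := √((m : ℝ) ^ 2 + (l : ℝ) ^ 2 + (4 * ((q + 2 : ℕ) : ℝ) - 6) * m * l) with hs
  have hs_sq : s ^ 2 = (m : ℝ) ^ 2 + (l : ℝ) ^ 2 + (4 * q + 2) * m * l := by
    have hcoeff : 4 * ((q + 2 : ℕ) : ℝ) - 6 = 4 * q + 2 := by push_cast; ring
    rw [hs, hcoeff, Real.sq_sqrt (by positivity)]
  have hquadratic : (X - C ((m : ℝ) - 1)) * (X - C ((l : ℝ) - 1)) - C ((q + 1) * (m * l) : ℝ) =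
      (X - C (((m : ℝ) + l - 2 - s) / 2)) * (X - C (((m : ℝ) + l - 2 + s) / 2)) :=
    X_sub_C_mul_X_sub_C_sub_C_of_add_eq_of_mul_eq (by ring)
      (by linear_combination (-1 / 4 : ℝ) * hs_sq)
  rw [charpoly_adjMat_genJoinK_starGraph_of_const (by simp) (by simp) hcard, hquadratic,
    Nat.add_sub_cancel, Nat.add_succ_sub_one]
  ring
end
end

section
/- Let k ≥ 3 and let Γ be the generalized join K_{1,k−1}[K_{n₁}, K_{n₂}, …, K_{n_k}], where the star K_{1,k−1} has vertices v₁, …, v_k with v₁ the central vertex, and n = n₁ + n₂ + ⋯ + n_k. Set N₁ = n − n₁ and N_i = n₁ for 2 ≤ i ≤ k. Then the characteristic polynomial of the Laplacian matrix of Γ is χ(L(Γ), x) = x · (x − n) · (x − n₁)^{k−2} · ∏_{i=1}^{k} (x − N_i − n_i)^{n_i − 1}. -/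
open Polynomial

noncomputable section
open scoped Classical

/-!
Let `E` be the vertex-by-clique incidence matrix of `Γ = I[K_{n₁}, …, K_{n_k}]` and let
`d_i = N_i + n_i`, where `N_i` is the number of vertices in the cliques adjacent to the `i`-th one.
Then `L(Γ) = diag(d_{a.1}) - E (1 + A(I)) Eᵀ`, and `E` intertwines the diagonal matrix with
`diag(d_i)`. Whenever `D E = E Δ`, comparing determinants of block matrices gives
`χ(D + E B) χ(Δ) = χ(D) χ(Δ + B E)`. Cancelling the monic `χ(Δ)`, this leaves
`∏ (x - d_i)^(n_i - 1)` times the characteristic polynomial of a `k × k` weighted Laplacian of `I`.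
For a star, that matrix is a scalar matrix plus one of rank two, and the same identity takes it down
to a `2 × 2` matrix.
-/

open Matrix

section DetAddMul

variable {R V W : Type*} [CommRing R] [Fintype V] [DecidableEq V] [Fintype W] [DecidableEq W]
  {D : Matrix V V R} {Δ : Matrix W W R} {E : Matrix V W R}

theorem det_add_mul_mul_det_of_mul_eq_mul (h : D * E = E * Δ) (B : Matrix W V R) :
    (D + E * B).det * Δ.det = D.det * (Δ + B * E).det := by
  have hblocks : fromBlocks D (-E) B 1 * fromBlocks 1 E 0 Δ = fromBlocks D 0 B (Δ + B * E) := by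
    simp [fromBlocks_multiply, h, add_comm Δ]
  simpa [det_fromBlocks_one₂₂, det_fromBlocks_zero₂₁, det_fromBlocks_zero₁₂]
    using congrArg det hblocks

theorem charpoly_add_mul_mul_charpoly_of_mul_eq_mul (h : D * E = E * Δ) (B : Matrix W V R) :
    (D + E * B).charpoly * Δ.charpoly = D.charpoly * (Δ + B * E).charpoly := by
  have hchar : D.charmatrix * E.map C = E.map C * Δ.charmatrix := by
    rw [charmatrix, charmatrix, Matrix.sub_mul, Matrix.mul_sub, RingHom.mapMatrix_apply,
      RingHom.mapMatrix_apply, ← Matrix.map_mul, ← Matrix.map_mul, h]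
    congr 1
    ext i j : 1
    rw [scalar_apply, scalar_apply, diagonal_mul, mul_diagonal, mul_comm]
  have hdet := det_add_mul_mul_det_of_mul_eq_mul hchar (-B.map C)
  have hleft : D.charmatrix + E.map C * -B.map C = (D + E * B).charmatrix := by
    simp only [charmatrix, map_add, RingHom.mapMatrix_apply, Matrix.map_mul, Matrix.mul_neg]
    abel
  have hright : Δ.charmatrix + -B.map C * E.map C = (Δ + B * E).charmatrix := by
    simp only [charmatrix, map_add, RingHom.mapMatrix_apply, Matrix.map_mul, Matrix.neg_mul]
    abel
  rwa [hleft, hright] at hdet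

end DetAddMul

/-- The Laplacian matrix of `I` with vertex weights `w`: the `i`-th row encodes the operator
`f ↦ ∑ j ~ i, w j * (f i - f j)`. For `w = n` it is the quotient of the Laplacian matrix of
`genJoinK I n` by the partition into cliques. -/
def weightedLapMatrix {ι R : Type*} [Fintype ι] [DecidableEq ι] [CommRing R] (I : SimpleGraph ι)
    [DecidableRel I.Adj] (w : ι → R) : Matrix ι ι R :=
  diagonal (fun i => ∑ j ∈ I.neighborFinset i, w j) - I.adjMatrix R * diagonal w

/-- The incidence matrix between the vertices of a generalized join and the cliques containing
them. -/
def cliqueIncMatrix (R : Type*) [Zero R] [One R] {ι : Type*} [DecidableEq ι] (n : ι → ℕ) :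
    Matrix (Σ i, Fin (n i)) ι R :=
  of fun a i => if a.1 = i then 1 else 0

section GenJoin

variable {R ι : Type*} [CommRing R] [Fintype ι] [DecidableEq ι]

theorem cliqueIncMatrix_mul_mul_transpose (n : ι → ℕ) (M : Matrix ι ι R) :
    cliqueIncMatrix R n * (M * (cliqueIncMatrix R n)ᵀ) = M.submatrix Sigma.fst Sigma.fst := by
  ext a b
  simp [cliqueIncMatrix, mul_apply]

theorem transpose_cliqueIncMatrix_mul_self (n : ι → ℕ) :
    (cliqueIncMatrix R n)ᵀ * cliqueIncMatrix R n = diagonal (fun i => (n i : R)) := by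
  ext i j
  by_cases hij : i = j
  · simp [cliqueIncMatrix, mul_apply, Fintype.sum_sigma, hij]
  · simp [cliqueIncMatrix, mul_apply, Fintype.sum_sigma, hij, Ne.symm hij]

theorem diagonal_fst_mul_cliqueIncMatrix (n : ι → ℕ) (d : ι → R) :
    diagonal (fun a : Σ i, Fin (n i) => d a.1) * cliqueIncMatrix R n =
      cliqueIncMatrix R n * diagonal d := by
  ext a i
  by_cases h : a.1 = i <;> simp [cliqueIncMatrix, h]

theorem genJoinK_adj {ι : Type*} {I : SimpleGraph ι} {n : ι → ℕ} {a b : Σ i, Fin (n i)} :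
    (genJoinK I n).Adj a b ↔ a ≠ b ∧ (a.1 = b.1 ∨ I.Adj a.1 b.1) := by
  simp only [genJoinK, SimpleGraph.fromRel_adj, I.adj_comm b.1, eq_comm (a := b.1), or_self]

theorem degree_genJoinK_add_one {ι : Type*} [Fintype ι] (I : SimpleGraph ι) [DecidableRel I.Adj]
    (n : ι → ℕ) (a : Σ i, Fin (n i)) :
    (genJoinK I n).degree a + 1 = ∑ j ∈ I.neighborFinset a.1, n j + n a.1 := by
  have hclosed : insert a ((genJoinK I n).neighborFinset a) =
      (insert a.1 (I.neighborFinset a.1)).sigma fun _ => Finset.univ := by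
    ext b
    by_cases hab : b = a
    · simp [hab]
    · simp [genJoinK_adj, hab, Ne.symm hab, eq_comm]
  rw [← SimpleGraph.card_neighborFinset_eq_degree,
    ← Finset.card_insert_of_notMem ((genJoinK I n).notMem_neighborFinset_self a), hclosed,
    Finset.card_sigma, Finset.sum_insert (I.notMem_neighborFinset_self a.1), add_comm]
  simp only [Finset.card_univ, Fintype.card_fin]

variable (I : SimpleGraph ι) [DecidableRel I.Adj]

theorem lapMatrix_genJoinK (n : ι → ℕ) :
    (genJoinK I n).lapMatrix R =
      diagonal (fun a => ((∑ j ∈ I.neighborFinset a.1, n j : ℕ) : R) + (n a.1 : R)) +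
        cliqueIncMatrix R n * (-(1 + I.adjMatrix R) * (cliqueIncMatrix R n)ᵀ) := by
  have hdeg (a : Σ i, Fin (n i)) : ((genJoinK I n).degree a : R) =
      ((∑ j ∈ I.neighborFinset a.1, n j : ℕ) : R) + (n a.1 : R) - 1 := by
    rw [eq_sub_iff_add_eq, ← Nat.cast_add, ← degree_genJoinK_add_one, Nat.cast_succ]
  rw [cliqueIncMatrix_mul_mul_transpose]
  ext a b
  by_cases hab : a = b
  · subst hab
    simp [SimpleGraph.lapMatrix, SimpleGraph.degMatrix, hdeg, sub_eq_add_neg]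
  · by_cases hfst : a.1 = b.1 <;>
      simp [SimpleGraph.lapMatrix, SimpleGraph.degMatrix, genJoinK_adj, hab, hfst]

theorem charpoly_lapMatrix_genJoinK (n : ι → ℕ) (hn : ∀ i, 1 ≤ n i) :
    ((genJoinK I n).lapMatrix R).charpoly =
      (weightedLapMatrix I (fun i => (n i : R))).charpoly *
        ∏ i, (X - C (((∑ j ∈ I.neighborFinset i, n j : ℕ) : R) + (n i : R))) ^ (n i - 1) := by
  set d : ι → R := fun i => ((∑ j ∈ I.neighborFinset i, n j : ℕ) : R) + (n i : R) with hd
  have hquotient : diagonal d +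
      -(1 + I.adjMatrix R) * (cliqueIncMatrix R n)ᵀ * cliqueIncMatrix R n =
        weightedLapMatrix I (fun i => (n i : R)) := by
    rw [Matrix.mul_assoc, transpose_cliqueIncMatrix_mul_self, hd, ← diagonal_add,
      weightedLapMatrix, neg_mul, add_mul, one_mul]
    push_cast
    abel
  have hdiagonal : (diagonal fun a : Σ i, Fin (n i) => d a.1).charpoly =
      (∏ i, (X - C (d i)) ^ (n i - 1)) * (diagonal d).charpoly := by
    simp only [charpoly_diagonal, Fintype.prod_sigma, Finset.prod_const, Finset.card_univ,
      Fintype.card_fin, ← Finset.prod_mul_distrib, ← pow_succ, Nat.sub_add_cancel (hn _)]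
  refine (charpoly_monic (diagonal d)).isRegular.right ?_
  calc ((genJoinK I n).lapMatrix R).charpoly * (diagonal d).charpoly
      = (diagonal fun a : Σ i, Fin (n i) => d a.1).charpoly *
          (weightedLapMatrix I (fun i => (n i : R))).charpoly := by
        rw [lapMatrix_genJoinK, charpoly_add_mul_mul_charpoly_of_mul_eq_mul
          (diagonal_fst_mul_cliqueIncMatrix n d), hquotient]
    _ = (weightedLapMatrix I (fun i => (n i : R))).charpoly *
          (∏ i, (X - C (d i)) ^ (n i - 1)) * (diagonal d).charpoly := by
        rw [hdiagonal]
        ring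

end GenJoin

section Star

variable {R ι : Type*} [CommRing R] [Fintype ι] [DecidableEq ι] (c : ι)

theorem neighborFinset_starGraph_center :
    (SimpleGraph.starGraph c).neighborFinset c = Finset.univ.erase c := by
  ext j
  simp [eq_comm]

theorem neighborFinset_starGraph_of_ne {i : ι} (hi : i ≠ c) :
    (SimpleGraph.starGraph c).neighborFinset i = {c} := by
  ext j
  simp only [SimpleGraph.mem_neighborFinset, SimpleGraph.starGraph_adj, Finset.mem_singleton]
  grind

theorem sum_neighborFinset_starGraph (n : ι → ℕ) (i : ι) :
    ∑ j ∈ (SimpleGraph.starGraph c).neighborFinset i, n j =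
      if i = c then (∑ j, n j) - n c else n c := by
  split_ifs with hi
  · rw [hi, neighborFinset_starGraph_center]
    exact eq_tsub_of_add_eq (Finset.sum_erase_add _ _ (Finset.mem_univ c))
  · rw [neighborFinset_starGraph_of_ne c hi, Finset.sum_singleton]

/-- The incidence matrix between the vertices of a star and the two cells of its partition into the
centre `c`, with index `0`, and the leaves, with index `1`. -/
def starIncMatrix (R : Type*) [Zero R] [One R] {ι : Type*} [DecidableEq ι] (c : ι) :
    Matrix ι (Fin 2) R :=
  of fun i => ![if i = c then 1 else 0, if i = c then 0 else 1]

/-- The distinct rows of `weightedLapMatrix (SimpleGraph.starGraph c) w - diagonal (fun _ => w c)`: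
that of the centre `c`, with index `0`, and the one shared by all leaves, with index `1`. -/
def starRowMatrix (w : ι → R) : Matrix (Fin 2) ι R :=
  of ![fun j => (if j = c then ∑ i, w i - w c else 0) - w j, fun j => if j = c then -w c else 0]

theorem weightedLapMatrix_starGraph (w : ι → R) :
    weightedLapMatrix (SimpleGraph.starGraph c) w =
      diagonal (fun _ => w c) + starIncMatrix R c * starRowMatrix c w := by
  ext i j
  rw [Matrix.add_apply, mul_apply, Fin.sum_univ_two]
  by_cases hi : i = c
  · subst hi
    by_cases hj : j = i
    · subst hj
      simp [weightedLapMatrix, starIncMatrix, starRowMatrix, neighborFinset_starGraph_center]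
    · simp [weightedLapMatrix, starIncMatrix, starRowMatrix, hj, Ne.symm hj]
  · by_cases hj : j = c
    · subst hj
      simp [weightedLapMatrix, starIncMatrix, starRowMatrix, hi]
    · by_cases hij : i = j <;>
        simp [weightedLapMatrix, starIncMatrix, starRowMatrix, neighborFinset_starGraph_of_ne, hi,
          hj, hij]

theorem mul_starIncMatrix_apply_zero {κ : Type*} (M : Matrix κ ι R) (p : κ) :
    (M * starIncMatrix R c) p 0 = M p c := by
  simp [mul_apply, starIncMatrix]

theorem mul_starIncMatrix_apply_one {κ : Type*} (M : Matrix κ ι R) (p : κ) :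
    (M * starIncMatrix R c) p 1 = ∑ i, M p i - M p c := by
  simp [mul_apply, starIncMatrix, Finset.sum_ite, Finset.filter_ne']

theorem diagonal_add_starRowMatrix_mul_starIncMatrix (w : ι → R) :
    diagonal (fun _ => w c) + starRowMatrix c w * starIncMatrix R c =
      !![∑ i, w i - w c, -(∑ i, w i - w c); -w c, w c] := by
  have hcentre : ∑ j, starRowMatrix c w 0 j - starRowMatrix c w 0 c = -(∑ i, w i - w c) := by
    simp only [starRowMatrix, of_apply, cons_val_zero, Finset.sum_sub_distrib,
      Finset.sum_ite_eq', Finset.mem_univ, if_true]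
    ring
  have hleaf : ∑ j, starRowMatrix c w 1 j - starRowMatrix c w 1 c = 0 := by
    simp [starRowMatrix]
  rw [← Matrix.ext_iff, Fin.forall_fin_two]
  simp only [Fin.forall_fin_two, Matrix.add_apply, mul_starIncMatrix_apply_zero,
    mul_starIncMatrix_apply_one, hcentre, hleaf]
  simp [starRowMatrix]

theorem charpoly_weightedLapMatrix_starGraph [Nontrivial ι] (w : ι → R) :
    (weightedLapMatrix (SimpleGraph.starGraph c) w).charpoly =
      X * (X - C (∑ i, w i)) * (X - C (w c)) ^ (Fintype.card ι - 2) := by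
  have hintertwine : (diagonal (fun _ => w c) : Matrix ι ι R) * starIncMatrix R c =
      starIncMatrix R c * (diagonal (fun _ => w c) : Matrix (Fin 2) (Fin 2) R) := by
    ext i j
    rw [diagonal_mul, mul_diagonal, mul_comm]
  have hcharpoly : (!![∑ i, w i - w c, -(∑ i, w i - w c); -w c, w c]).charpoly =
      X * (X - C (∑ i, w i)) := by
    simp only [charpoly, det_fin_two, charmatrix_apply_eq, charmatrix_apply_ne, of_apply,
      cons_val', cons_val_zero, cons_val_one, cons_val_fin_one, map_sub, map_neg, ne_eq,
      zero_ne_one, one_ne_zero, not_false_eq_true]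
    ring
  refine (charpoly_monic (diagonal fun _ : Fin 2 => w c)).isRegular.right ?_
  calc (weightedLapMatrix (SimpleGraph.starGraph c) w).charpoly *
          (diagonal fun _ : Fin 2 => w c).charpoly
      = (diagonal fun _ : ι => w c).charpoly * (X * (X - C (∑ i, w i))) := by
        rw [weightedLapMatrix_starGraph, charpoly_add_mul_mul_charpoly_of_mul_eq_mul hintertwine,
          diagonal_add_starRowMatrix_mul_starIncMatrix, hcharpoly]
    _ = X * (X - C (∑ i, w i)) * (X - C (w c)) ^ (Fintype.card ι - 2) *
          (diagonal fun _ : Fin 2 => w c).charpoly := by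
        simp only [charpoly_diagonal, Finset.prod_const, Finset.card_univ, Fintype.card_fin]
        rw [mul_assoc, ← pow_add, Nat.sub_add_cancel Fintype.one_lt_card, mul_comm]

end Star

theorem stmt_7_general {R ι : Type*} [CommRing R] [Fintype ι] [DecidableEq ι] [Nontrivial ι]
    (n : ι → ℕ) (hn : ∀ i, 1 ≤ n i) (c : ι) :
    ((genJoinK (SimpleGraph.starGraph c) n).lapMatrix R).charpoly =
      X * (X - C ((∑ i, n i : ℕ) : R)) * (X - C ((n c : R))) ^ (Fintype.card ι - 2) *
        ∏ i, (X - C (((if i = c then (∑ j, n j) - n c else n c : ℕ) : R) + (n i : R)))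
          ^ (n i - 1) := by
  rw [charpoly_lapMatrix_genJoinK _ n hn, charpoly_weightedLapMatrix_starGraph, Nat.cast_sum]
  simp only [sum_neighborFinset_starGraph]

theorem lapMat_eq_lapMatrix {V : Type*} [Fintype V] [DecidableEq V] (Γ : SimpleGraph V) :
    lapMat Γ = Γ.lapMatrix ℝ := by
  ext u v
  simp [lapMat, adjMat, SimpleGraph.lapMatrix, SimpleGraph.degMatrix, diagonal_apply,
    ← SimpleGraph.card_neighborFinset_eq_degree, SimpleGraph.neighborFinset_eq_filter]

theorem starGraph_eq_starGraph {k : ℕ} {c : Fin k} (hc : c.val = 0) :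
    starGraph k = SimpleGraph.starGraph c := by
  simp only [starGraph, SimpleGraph.starGraph, Fin.ext_iff, hc]

/-- Laplacian characteristic polynomial of the generalized join
`K_{1,k−1}[K_{n₁}, …, K_{n_k}]` of complete graphs along a star with central vertex `v₁`:
`χ(L(Γ), x) = x (x − n) (x − n₁)^{k−2} ∏ᵢ (x − Nᵢ − nᵢ)^{nᵢ−1}` with `N₁ = n − n₁` and
`Nᵢ = n₁` for the pendant vertices. -/
theorem stmt_7 (k : ℕ) (hk : 3 ≤ k) (n : Fin k → ℕ) (hn : ∀ i, 1 ≤ n i)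
    (v₁ : Fin k) (hv : v₁.val = 0) :
    (lapMat (genJoinK (starGraph k) n)).charpoly =
      X * (X - C ((∑ i, n i : ℕ) : ℝ)) * (X - C ((n v₁ : ℝ))) ^ (k - 2) *
        ∏ i, (X - C (((if i = v₁ then (∑ j, n j) - n v₁ else n v₁ : ℕ) : ℝ) + (n i : ℝ)))
          ^ (n i - 1) := by
  have : Nontrivial (Fin k) := Fin.nontrivial_iff_two_le.mpr (by omega)
  simpa [lapMat_eq_lapMatrix, starGraph_eq_starGraph hv] using stmt_7_general (R := ℝ) n hn v₁
end
end

section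
/- Let p and q be distinct primes with q dividing p − 1, and let G be a nonabelian group of order pq (i.e., G ≅ ℤ_p ⋊ ℤ_q, the nontrivial semidirect product). Then the characteristic polynomial of the adjacency matrix of the order super commuting graph Δ^o(G) is χ(A(Δ^o(G)), x) = (x + 1)^{pq−3} · [x³ − (pq − 3)x² + (p²q − 3pq − p² + p + 3)x + (2p²q − 3pq − 2p² + 2p + 1)]. Moreover, Δ^o(G) has eigenvalue −1 with multiplicity pq − 3, and the three remaining simple eigenvalues α < β < γ satisfy −2 < α < −1, p − 2 < β < p − 1, and pq − p < γ < pq − p + 1. -/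
/-!
In a nonabelian group `G` of order `pq` every nontrivial element has order `p` or `q`. Commuting
elements of distinct prime orders would have a product of composite order, so `Δ^o(G)` consists of
the cliques formed by the elements of order `1`, `p` and `q`, joined along the star `K_{1,2}` whose
centre is the class of `1`. Since `q < p`, the subgroup of order `p` is normal, hence contains all
elements of order `p`, and the three cliques have sizes `1`, `a = p - 1` and `b = pq - p`.

Thus `A + 1` is a `3 × 3` matrix blown up along the order classes, and `det (x - UV)` and
`det (x - VU)` agree up to a power of `x`. In `y = x + 1` the remaining factor is
`y³ - (1 + a + b) y² + ab y + ab`, whose values at `-1, 0, a, a + 1, b + 1, b + 2` have signs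
`-, +, +, -, -, +`.
-/

open Polynomial

noncomputable section
open scoped Classical

open Finset Matrix

section Blowup

variable {R V ι : Type*} [CommRing R] [Fintype V] [DecidableEq ι]

lemma one_submatrix_mul_one_submatrix (f : V → ι) :
    (1 : Matrix ι ι R).submatrix id f * (1 : Matrix ι ι R).submatrix f id =
      diagonal fun i => (#{v | f v = i} : R) := by
  ext i j
  rw [mul_apply, diagonal_apply, natCast_card_filter]
  rcases eq_or_ne i j with rfl | hij
  · rw [if_pos rfl]
    exact sum_congr rfl fun v _ => by by_cases hv : f v = i <;> simp [one_apply, hv, Ne.symm]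
  · rw [if_neg hij]
    exact sum_eq_zero fun v _ => by by_cases hv : f v = j <;> simp [one_apply, hv, hij]

lemma charpoly_submatrix_self [Fintype ι] [DecidableEq V] (M : Matrix ι ι R) (f : V → ι)
    (hle : Fintype.card ι ≤ Fintype.card V) :
    (M.submatrix f f).charpoly =
      X ^ (Fintype.card V - Fintype.card ι) *
        (M * diagonal fun i => (#{v | f v = i} : R)).charpoly := by
  have hleft : (1 : Matrix ι ι R).submatrix f id * M.submatrix id f = M.submatrix f f :=
    one_submatrix_mul f (Equiv.refl ι) (M.submatrix id f)
  have hright : M * (1 : Matrix ι ι R).submatrix id f = M.submatrix id f :=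
    mul_submatrix_one (Equiv.refl ι) f M
  rw [← hleft, charpoly_mul_comm_of_le _ _ hle, ← hright, Matrix.mul_assoc,
    one_submatrix_mul_one_submatrix]

end Blowup

section CliqueJoin

variable {V ι : Type*}

/-- `Γ` is the generalized join, along the graph `H`, of complete graphs placed on the fibres
of `f`. This is the situation of `genJoinK`, stated for a graph on any vertex set. -/
def IsCliqueJoin (Γ : SimpleGraph V) (H : SimpleGraph ι) (f : V → ι) : Prop :=
  ∀ ⦃u v⦄, u ≠ v → (Γ.Adj u v ↔ f u = f v ∨ H.Adj (f u) (f v))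

variable [Fintype V] [Fintype ι] [DecidableEq ι]
  {Γ : SimpleGraph V} {H : SimpleGraph ι} {f : V → ι}

lemma IsCliqueJoin.adjMat_add_one (hΓ : IsCliqueJoin Γ H f) :
    adjMat Γ + 1 = (adjMat H + 1).submatrix f f := by
  ext u v
  rcases eq_or_ne u v with rfl | huv
  · simp [adjMat]
  · by_cases hf : f u = f v <;> simp [adjMat, hΓ huv, one_apply, huv, hf]

lemma IsCliqueJoin.charpoly_adjMat (hΓ : IsCliqueJoin Γ H f)
    (hle : Fintype.card ι ≤ Fintype.card V) :
    (adjMat Γ).charpoly =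
      (X + 1) ^ (Fintype.card V - Fintype.card ι) *
        ((adjMat H + 1) * diagonal fun i => (#{v | f v = i} : ℝ)).charpoly.comp (X + 1) := by
  have hA : adjMat Γ = (adjMat H + 1).submatrix f f - scalar V 1 := by
    rw [← hΓ.adjMat_add_one, map_one, add_sub_cancel_right]
  rw [hA, charpoly_sub_scalar, charpoly_submatrix_self _ _ hle, mul_comp, pow_comp, X_comp, C_1]

end CliqueJoin

lemma starGraph_adj {k : ℕ} {a b : Fin k} :
    (starGraph k).Adj a b ↔ a ≠ b ∧ (a.val = 0 ∨ b.val = 0) :=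
  SimpleGraph.fromRel_adj _ _ _

/-- The characteristic polynomial of the quotient matrix of a clique join along `starGraph 3` with
central clique of size `c` and outer cliques of sizes `a` and `b`. -/
def starCubic (c a b : ℝ) : ℝ[X] :=
  X ^ 3 - C (c + a + b) * X ^ 2 + C (a * b) * X + C (c * a * b)

lemma charpoly_adjMat_starGraph_add_one_mul_diagonal (c a b : ℝ) :
    ((adjMat (starGraph 3) + 1) * diagonal ![c, a, b]).charpoly = starCubic c a b := by
  have hM : (adjMat (starGraph 3) + 1) * diagonal ![c, a, b] = !![c, a, b; c, a, 0; c, 0, b] := by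
    ext i j
    fin_cases i <;> fin_cases j <;> simp [mul_diagonal, adjMat, starGraph_adj]
  rw [hM, Matrix.charpoly, det_fin_three]
  simp only [charmatrix_apply_eq, charmatrix_apply_ne, of_apply, cons_val', cons_val_zero,
    cons_val_one, cons_val_fin_one, Matrix.cons_val, ne_eq, Fin.reduceEq, not_false_eq_true,
    zero_ne_one, one_ne_zero, map_zero, starCubic, map_add, map_mul]
  ring

section OrderSuper

variable {p q : ℕ} {G : Type*} [Group G]

lemma orderSuper_adj {x y : G} :
    (orderSuper G).Adj x y ↔ x ≠ y ∧ (orderOf x = orderOf y ∨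
      ∃ x' y' : G, x' ≠ y' ∧ Commute x' y' ∧ orderOf x' = orderOf x ∧ orderOf y' = orderOf y) := by
  rw [orderSuper, SimpleGraph.fromRel_adj]
  refine and_congr_right fun _ => ⟨?_, Or.inl⟩
  rintro (h | h | ⟨y', x', hne, hc, hy, hx⟩)
  · exact h
  · exact Or.inl h.symm
  · exact Or.inr ⟨x', y', hne.symm, hc.symm, hx, hy⟩

lemma orderOf_eq_of_commute_of_prime_orderOf (hG : ∀ g : G, g ≠ 1 → (orderOf g).Prime) {x y : G}
    (hxy : Commute x y) (hx : x ≠ 1) (hy : y ≠ 1) : orderOf x = orderOf y := by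
  by_contra hne
  have hmul : orderOf (x * y) = orderOf x * orderOf y :=
    hxy.orderOf_mul_eq_mul_orderOf_of_coprime
      ((Nat.coprime_primes (hG x hx) (hG y hy)).2 hne)
  have hxy1 : x * y ≠ 1 := by
    rw [Ne, ← orderOf_eq_one_iff, hmul]
    exact fun h => (hG x hx).ne_one (Nat.eq_one_of_mul_eq_one_right h)
  exact Nat.not_prime_mul (hG x hx).ne_one (hG y hy).ne_one (hmul ▸ hG _ hxy1)

lemma orderSuper_adj_iff_of_prime_orderOf (hG : ∀ g : G, g ≠ 1 → (orderOf g).Prime) {x y : G}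
    (hne : x ≠ y) :
    (orderSuper G).Adj x y ↔ orderOf x = orderOf y ∨ x = 1 ∨ y = 1 := by
  rw [orderSuper_adj]
  constructor
  · rintro ⟨-, h | ⟨x', y', -, hc, hx, hy⟩⟩
    · exact Or.inl h
    · by_contra! h
      have hx' : x' ≠ 1 := by rw [Ne, ← orderOf_eq_one_iff, hx, orderOf_eq_one_iff]; exact h.2.1
      have hy' : y' ≠ 1 := by rw [Ne, ← orderOf_eq_one_iff, hy, orderOf_eq_one_iff]; exact h.2.2
      exact h.1 (hx ▸ hy ▸ orderOf_eq_of_commute_of_prime_orderOf hG hc hx' hy')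
  · rintro (h | rfl | rfl)
    · exact ⟨hne, Or.inl h⟩
    · exact ⟨hne, Or.inr ⟨1, y, hne, Commute.one_left y, rfl, rfl⟩⟩
    · exact ⟨hne, Or.inr ⟨x, 1, hne, Commute.one_right x, rfl, rfl⟩⟩

/-- The order class of an element of a group in which all orders are `1`, `p` or `q`: the
identity has class `0`, elements of order `p` have class `1`, and all others class `2`. Class `0`
is the centre of the star `starGraph 3`. -/
def orderClass (p : ℕ) (g : G) : Fin 3 :=
  if g = 1 then 0 else if orderOf g = p then 1 else 2

lemma orderClass_eq_zero {g : G} : orderClass p g = 0 ↔ g = 1 := by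
  unfold orderClass
  split_ifs <;> simp_all

lemma orderClass_eq_one (hp : p ≠ 1) {g : G} : orderClass p g = 1 ↔ orderOf g = p := by
  unfold orderClass
  split_ifs <;> simp_all [eq_comm]

lemma orderClass_eq_iff (hG : ∀ g : G, g ≠ 1 → orderOf g = p ∨ orderOf g = q) {g h : G} :
    orderClass p g = orderClass p h ↔ orderOf g = orderOf h := by
  have := hG g
  have := hG h
  have := orderOf_eq_one_iff (x := g)
  have := orderOf_eq_one_iff (x := h)
  unfold orderClass
  grind

lemma isCliqueJoin_orderSuper (hp : p.Prime) (hq : q.Prime)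
    (hG : ∀ g : G, g ≠ 1 → orderOf g = p ∨ orderOf g = q) :
    IsCliqueJoin (orderSuper G) (starGraph 3) (orderClass p) := by
  intro x y hne
  have hprime : ∀ g : G, g ≠ 1 → (orderOf g).Prime := fun g hg =>
    (hG g hg).elim (fun h => h ▸ hp) (fun h => h ▸ hq)
  rw [orderSuper_adj_iff_of_prime_orderOf hprime hne, starGraph_adj,
    Fin.val_eq_zero_iff, Fin.val_eq_zero_iff, orderClass_eq_zero, orderClass_eq_zero, Ne,
    orderClass_eq_iff hG]
  tauto

end OrderSuper

section Counting

variable {p q : ℕ} {G : Type*} [Group G]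

lemma mem_of_coprime_orderOf_index {H : Subgroup G} [H.Normal] {g : G}
    (hg : H.index.Coprime (orderOf g)) : g ∈ H := by
  obtain ⟨m, hm⟩ := exists_pow_eq_self_of_coprime hg
  exact hm ▸ H.pow_mem (H.pow_index_mem g) m

lemma normal_of_isPGroup_of_index_lt [Finite G] [Fact p.Prime] {H : Subgroup G}
    (hH : IsPGroup p H) (hlt : H.index < p) : H.Normal := by
  have hpos : 0 < H.index := Nat.pos_of_ne_zero Subgroup.index_ne_zero_of_finite
  let P : Sylow p G := hH.toSylow (Nat.not_dvd_of_pos_of_lt hpos hlt)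
  have hcard : Nat.card (Sylow p G) = 1 :=
    (card_sylow_modEq_one p G).eq_of_lt_of_lt
      ((Nat.le_of_dvd hpos P.card_dvd_index).trans_lt hlt) (Fact.out : p.Prime).one_lt
  have := (Nat.card_eq_one_iff_unique.1 hcard).1
  exact P.normal_of_subsingleton

lemma card_orderOf_eq_totient_of_normal [Fintype G] (H : Subgroup G) [H.Normal] [IsCyclic H]
    (hH : (Nat.card H).Coprime H.index) {d : ℕ} (hd : d ∣ Nat.card H) :
    #{g : G | orderOf g = d} = d.totient := by
  have himage : ({g : G | orderOf g = d} : Finset G) =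
      ({h : H | orderOf h = d} : Finset H).map (Function.Embedding.subtype (· ∈ H)) := by
    ext g
    simp only [mem_map, mem_filter_univ, Function.Embedding.subtype_apply]
    refine ⟨fun hg => ?_, ?_⟩
    · have hgH : g ∈ H := mem_of_coprime_orderOf_index (hg ▸ (hH.coprime_dvd_left hd).symm)
      exact ⟨⟨g, hgH⟩, by rwa [Subgroup.orderOf_mk], rfl⟩
    · rintro ⟨h, rfl, rfl⟩
      exact Subgroup.orderOf_coe h
  rw [himage, card_map, IsCyclic.card_orderOf_eq_totient (Nat.card_eq_fintype_card (α := H) ▸ hd)]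

variable [Fintype G]

lemma card_orderOf_eq_prime_of_card_eq_mul (hp : p.Prime) (hq : 0 < q) (hlt : q < p)
    (hcard : Fintype.card G = p * q) : #{g : G | orderOf g = p} = p - 1 := by
  have := Fact.mk hp
  obtain ⟨x, hx⟩ := exists_prime_orderOf_dvd_card (G := G) p (hcard ▸ dvd_mul_right p q)
  have hH : Nat.card (Subgroup.zpowers x) = p := by rw [Nat.card_zpowers, hx]
  have hindex : (Subgroup.zpowers x).index = q := by
    have hmul := (Subgroup.zpowers x).card_mul_index
    rw [hH, Nat.card_eq_fintype_card, hcard] at hmul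
    exact Nat.eq_of_mul_eq_mul_left hp.pos hmul
  have : (Subgroup.zpowers x).Normal :=
    normal_of_isPGroup_of_index_lt (IsPGroup.of_card (n := 1) (by rw [hH, pow_one]))
      (hindex.trans_lt hlt)
  have hcoprime : p.Coprime q := Nat.coprime_of_lt_prime hq.ne' hlt hp
  rw [card_orderOf_eq_totient_of_normal (Subgroup.zpowers x) (by rwa [hH, hindex]) hH.symm.dvd,
    Nat.totient_prime hp]

lemma card_orderClass_eq (hp : p.Prime) (hq : 0 < q) (hlt : q < p)
    (hcard : Fintype.card G = p * q) :
    (fun i => (#{g : G | orderClass p g = i} : ℝ)) = ![1, (p : ℝ) - 1, p * q - p] := by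
  have h0 : (#{g : G | orderClass p g = 0} : ℝ) = 1 := by
    rw [Nat.cast_eq_one, card_eq_one]
    exact ⟨1, by ext; simp [orderClass_eq_zero]⟩
  have h1 : (#{g : G | orderClass p g = 1} : ℝ) = p - 1 := by
    simp only [orderClass_eq_one hp.ne_one, card_orderOf_eq_prime_of_card_eq_mul hp hq hlt hcard,
      Nat.cast_pred hp.pos]
  have hsum : ∑ i, (#{g : G | orderClass p g = i} : ℝ) = p * q := by
    rw [← Nat.cast_sum, ← card_eq_sum_card_fiberwise fun _ _ => mem_coe.2 (mem_univ _), card_univ,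
      hcard, Nat.cast_mul]
  rw [Fin.sum_univ_three, h0, h1] at hsum
  ext i
  fin_cases i
  · exact h0
  · exact h1
  · change (#{g : G | orderClass p g = 2} : ℝ) = p * q - p
    linarith

lemma orderOf_eq_or_eq_of_not_isCyclic (hp : p.Prime) (hq : q.Prime)
    (hcard : Fintype.card G = p * q) (hG : ¬ IsCyclic G) {g : G} (hg : g ≠ 1) :
    orderOf g = p ∨ orderOf g = q := by
  obtain ⟨a, b, ha, hb, hab⟩ := Nat.dvd_mul.1 (hcard ▸ orderOf_dvd_card (x := g))
  rcases (Nat.dvd_prime hp).1 ha with rfl | rfl <;> rcases (Nat.dvd_prime hq).1 hb with rfl | rfl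
  · exact absurd (orderOf_eq_one_iff.1 hab.symm) hg
  · exact Or.inr (by rw [← hab, one_mul])
  · exact Or.inl (by rw [← hab, mul_one])
  · exact absurd (isCyclic_of_orderOf_eq_card g (by rw [Nat.card_eq_fintype_card, hcard, hab])) hG

lemma charpoly_adjMat_orderSuper_of_not_isCyclic (hp : p.Prime) (hq : q.Prime) (hlt : q < p)
    (hcard : Fintype.card G = p * q) (hG : ¬ IsCyclic G) :
    (adjMat (orderSuper G)).charpoly = (X + 1) ^ (p * q - 3) *
      (starCubic 1 (p - 1) (p * q - p)).comp (X + 1) := by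
  have hjoin : IsCliqueJoin (orderSuper G) (starGraph 3) (orderClass p) :=
    isCliqueJoin_orderSuper hp hq fun _ => orderOf_eq_or_eq_of_not_isCyclic hp hq hcard hG
  have hle : Fintype.card (Fin 3) ≤ Fintype.card G := by
    rw [Fintype.card_fin, hcard]
    nlinarith [hp.two_le, hq.two_le]
  rw [hjoin.charpoly_adjMat hle, card_orderClass_eq hp hq.pos hlt hcard,
    charpoly_adjMat_starGraph_add_one_mul_diagonal, Fintype.card_fin, hcard]

end Counting

section Cubic

lemma exists_isRoot_mem_Ioo {P : ℝ[X]} {a b : ℝ} (hab : a ≤ b) (h : P.eval a * P.eval b < 0) :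
    ∃ x ∈ Set.Ioo a b, P.IsRoot x := by
  rcases mul_neg_iff.1 h with ⟨ha, hb⟩ | ⟨ha, hb⟩
  · exact intermediate_value_Ioo' hab P.continuousOn ⟨hb, ha⟩
  · exact intermediate_value_Ioo hab P.continuousOn ⟨ha, hb⟩

lemma eq_prod_X_sub_C_of_monic {K : Type*} [CommRing K] [IsDomain K] {P : K[X]} (hP : P.Monic)
    {s : Finset K} (hs : ∀ x ∈ s, P.IsRoot x) (hcard : P.natDegree = #s) :
    P = ∏ x ∈ s, (X - C x) := by
  have hroots : P.roots = s.val :=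
    roots_eq_of_natDegree_le_card_of_ne_zero hs hcard.le hP.ne_zero
  rw [← prod_multiset_X_sub_C_of_monic_of_roots_card_eq hP (by rw [hroots, hcard, card_val]),
    hroots]
  rfl

lemma eval_starCubic (c a b y : ℝ) :
    (starCubic c a b).eval y = y ^ 3 - (c + a + b) * y ^ 2 + a * b * y + c * a * b := by
  simp [starCubic]

lemma natDegree_starCubic (c a b : ℝ) : (starCubic c a b).natDegree = 3 := by
  unfold starCubic
  compute_degree!

lemma monic_starCubic (c a b : ℝ) : (starCubic c a b).Monic := by
  unfold starCubic
  monicity!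

lemma exists_isRoot_starCubic_mem_Ioo {c a b : ℝ} (hc : 0 < c) (ha : 0 < a) (hab : a < b) :
    ∃ α ∈ Set.Ioo (-c) 0, ∃ β ∈ Set.Ioo a (a + c), ∃ γ ∈ Set.Ioo (b + c) (b + 2 * c),
      (starCubic c a b).IsRoot α ∧ (starCubic c a b).IsRoot β ∧ (starCubic c a b).IsRoot γ := by
  have hb : 0 < b := ha.trans hab
  have hba : 0 < b - a := sub_pos.2 hab
  have hneg : (starCubic c a b).eval (-c) < 0 := by
    rw [eval_starCubic]
    linarith [show 0 < c ^ 2 * (2 * c + a + b) by positivity]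
  have hzero : 0 < (starCubic c a b).eval 0 := by
    rw [eval_starCubic]
    linarith [show 0 < c * a * b by positivity]
  have ha_pos : 0 < (starCubic c a b).eval a := by
    rw [eval_starCubic]
    linarith [mul_pos (mul_pos hc ha) hba]
  have hac_neg : (starCubic c a b).eval (a + c) < 0 := by
    rw [eval_starCubic]
    linarith [show 0 < b * c ^ 2 by positivity]
  have hbc_neg : (starCubic c a b).eval (b + c) < 0 := by
    rw [eval_starCubic]
    linarith [show 0 < a * c ^ 2 by positivity]
  have hb2c_pos : 0 < (starCubic c a b).eval (b + 2 * c) := by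
    rw [eval_starCubic]
    linarith [show 0 < c * ((b - a) * (b + 4 * c) + 4 * c ^ 2) by positivity]
  obtain ⟨α, hα, hα_root⟩ :=
    exists_isRoot_mem_Ioo (by linarith) (mul_neg_of_neg_of_pos hneg hzero)
  obtain ⟨β, hβ, hβ_root⟩ :=
    exists_isRoot_mem_Ioo (by linarith) (mul_neg_of_pos_of_neg ha_pos hac_neg)
  obtain ⟨γ, hγ, hγ_root⟩ :=
    exists_isRoot_mem_Ioo (by linarith) (mul_neg_of_neg_of_pos hbc_neg hb2c_pos)
  exact ⟨α, hα, β, hβ, γ, hγ, hα_root, hβ_root, hγ_root⟩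

lemma exists_starCubic_eq_mul {c a b : ℝ} (hc : 0 < c) (ha : 0 < a) (hab : a < b) :
    ∃ α ∈ Set.Ioo (-c) 0, ∃ β ∈ Set.Ioo a (a + c), ∃ γ ∈ Set.Ioo (b + c) (b + 2 * c),
      starCubic c a b = (X - C α) * (X - C β) * (X - C γ) := by
  obtain ⟨α, hα, β, hβ, γ, hγ, hα_root, hβ_root, hγ_root⟩ :=
    exists_isRoot_starCubic_mem_Ioo hc ha hab
  have hαβ : α ≠ β := (hα.2.trans (ha.trans hβ.1)).ne
  have hβγ : β ≠ γ := ne_of_lt (by linarith [hβ.2, hγ.1])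
  have hαγ : α ≠ γ := ne_of_lt (by linarith [hα.2, hγ.1])
  have hcard : #{α, β, γ} = 3 := card_eq_three.2 ⟨α, β, γ, hαβ, hαγ, hβγ, rfl⟩
  have hroots : ∀ x ∈ ({α, β, γ} : Finset ℝ), (starCubic c a b).IsRoot x := by
    simp only [mem_insert, mem_singleton]
    rintro x (rfl | rfl | rfl) <;> assumption
  refine ⟨α, hα, β, hβ, γ, hγ, ?_⟩
  rw [eq_prod_X_sub_C_of_monic (monic_starCubic c a b) hroots
    ((natDegree_starCubic c a b).trans hcard.symm)]
  simp [hαβ, hαγ, hβγ, mul_assoc]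

end Cubic

/-- Adjacency spectrum of the order super commuting graph of a nonabelian group of order
`pq`, where `p, q` are distinct primes with `q ∣ p − 1`: the characteristic polynomial is
`(x+1)^{pq−3} (x³ − (pq−3)x² + (p²q−3pq−p²+p+3)x + (2p²q−3pq−2p²+2p+1))`; moreover `−1`
is an eigenvalue of multiplicity `pq−3` and the three remaining simple eigenvalues
`α < β < γ` satisfy `−2 < α < −1`, `p−2 < β < p−1` and `pq−p < γ < pq−p+1`. -/
theorem stmt_10 (p q : ℕ) (hp : p.Prime) (hq : q.Prime) (hpq : p ≠ q) (hdvd : q ∣ p - 1)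
    (G : Type*) [Group G] [Fintype G] (hcard : Fintype.card G = p * q)
    (hnab : ∃ x y : G, x * y ≠ y * x) :
    (adjMat (orderSuper G)).charpoly =
        (X + 1) ^ (p * q - 3) *
          (X ^ 3 - C ((p : ℝ) * q - 3) * X ^ 2 +
            C ((p : ℝ) ^ 2 * q - 3 * p * q - (p : ℝ) ^ 2 + p + 3) * X +
            C (2 * (p : ℝ) ^ 2 * q - 3 * p * q - 2 * (p : ℝ) ^ 2 + 2 * p + 1)) ∧
      ∃ α β γ : ℝ, α < β ∧ β < γ ∧
        (-2 < α ∧ α < -1) ∧ ((p : ℝ) - 2 < β ∧ β < (p : ℝ) - 1) ∧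
        ((p : ℝ) * q - p < γ ∧ γ < (p : ℝ) * q - p + 1) ∧
        (adjMat (orderSuper G)).charpoly =
          (X + 1) ^ (p * q - 3) * ((X - C α) * (X - C β) * (X - C γ)) := by
  have hlt : q < p :=
    (Nat.le_of_dvd (Nat.sub_pos_of_lt hp.one_lt) hdvd).trans_lt (Nat.sub_one_lt hp.ne_zero)
  have hG : ¬ IsCyclic G := fun _ =>
    hnab.elim fun x ⟨y, hxy⟩ => hxy (IsCyclic.commGroup.mul_comm x y)
  have hchar := charpoly_adjMat_orderSuper_of_not_isCyclic hp hq hlt hcard hG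
  have hp1 : (0 : ℝ) < p - 1 := sub_pos.2 (mod_cast hp.one_lt)
  have hsizes : (p : ℝ) - 1 < p * q - p := by
    have hq2 : (2 : ℝ) ≤ q := mod_cast hq.two_le
    nlinarith
  obtain ⟨α, ⟨hα_gt, hα_lt⟩, β, ⟨hβ_gt, hβ_lt⟩, γ, ⟨hγ_gt, hγ_lt⟩, hfactor⟩ :=
    exists_starCubic_eq_mul one_pos hp1 hsizes
  refine ⟨?_, α - 1, β - 1, γ - 1, by linarith, by linarith, ⟨by linarith, by linarith⟩,
    ⟨by linarith, by linarith⟩, ⟨by linarith, by linarith⟩, ?_⟩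
  · rw [hchar, starCubic]
    congr 1
    simp only [map_mul, map_natCast, map_sub, map_one, add_comp, sub_comp, pow_comp, X_comp,
      mul_comp, natCast_comp, one_comp, map_ofNat, map_add, map_pow]
    ring
  · rw [hchar, hfactor]
    congr 1
    simp only [mul_comp, sub_comp, X_comp, C_comp, map_sub, map_one]
    ring
end
end

section
/- Let p and q be distinct primes with q dividing p − 1, and let G be a nonabelian group of order pq. Then the Laplacian eigenvalues of the order super commuting graph Δ^o(G) are exactly: 0 with multiplicity 1, 1 with multiplicity 1, p with multiplicity p − 2, pq − p + 1 with multiplicity pq − p − 1, and pq with multiplicity 1; equivalently, χ(L(Δ^o(G)), x) = x(x − 1)(x − p)^{p−2}(x − (pq − p + 1))^{pq−p−1}(x − pq). -/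
/-!
Every nonidentity element of `G` has order `p` or `q`, and commuting nonidentity elements have the
same order, since otherwise their product would have order `pq`. Hence `Δ^o(G)` is the join of `K₁`
with the disjoint union of complete graphs on the elements of order `p` and of order `q`. There are
`p - 1` elements of order `p` because the Sylow `p`-subgroup is unique.

For the spectrum of a join, let `J` be the all-ones matrix. The all-ones vector is an eigenvector of
every Laplacian, so by Brauer's rank-one formula adding `J` moves just one root of the
characteristic polynomial; and adding `J` to the Laplacian of a join makes it block diagonal.
-/

open Polynomial

noncomputable section
open scoped Classical

section RankOne

open Matrix

variable {n R : Type*} [Fintype n] [DecidableEq n] [CommRing R]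

theorem charpoly_add_scalar (A : Matrix n n R) (μ : R) :
    (A + scalar n μ).charpoly = A.charpoly.comp (X - C μ) := by
  simpa [sub_eq_add_neg] using charpoly_sub_scalar A (-μ)

theorem X_sub_C_mul_charpoly_vecMulVec_add_scalar (u v : n → R) (μ : R) :
    (X - C μ) * (vecMulVec u v + scalar n μ).charpoly =
      (X - C (μ + v ⬝ᵥ u)) * (X - C μ) ^ Fintype.card n := by
  have hzero : X * (vecMulVec u v).charpoly = (X - C (v ⬝ᵥ u)) * X ^ Fintype.card n := by
    rw [charpoly_vecMulVec, dotProduct_comm v u]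
    cases isEmpty_or_nonempty n
    · simp
    · rw [mul_sub, mul_smul_comm, mul_pow_sub_one Fintype.card_ne_zero, sub_mul, smul_eq_C_mul]
  have hcomp := congrArg (·.comp (X - C μ)) hzero
  simpa only [charpoly_add_scalar, mul_comp, sub_comp, X_comp, C_comp, pow_comp, sub_sub, C_add]
    using hcomp

-- With `M` the characteristic matrix of `A` we have `M u = (X - μ) u`, so that
-- `M ((X - μ) - u vᵀ) = (X - μ) (M - u vᵀ)`; take determinants.
theorem X_sub_C_mul_charpoly_add_vecMulVec {A : Matrix n n R} {u : n → R} {μ : R}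
    (hu : A *ᵥ u = μ • u) (v : n → R) :
    (X - C μ) * (A + vecMulVec u v).charpoly = (X - C (μ + v ⬝ᵥ u)) * A.charpoly := by
  set B : Matrix n n R := vecMulVec u v
  have hAB : A * B = μ • B := by rw [mul_vecMulVec, hu, smul_vecMulVec]
  have hmatrix : charmatrix A * charmatrix (B + scalar n μ) =
      (X - C μ) • charmatrix (A + B) := by
    have hshift : charmatrix (B + scalar n μ) = (X - C μ) • 1 - C.mapMatrix B := by
      have hscalar : C.mapMatrix (scalar n μ) = scalar n (C μ) := by
        simp [diagonal_map]
      rw [charmatrix, map_add, hscalar, sub_add_eq_sub_sub_swap, ← map_sub, scalar_apply,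
        smul_one_eq_diagonal]
    have hcharA : charmatrix A * C.mapMatrix B = (X - C μ) • C.mapMatrix B := by
      rw [charmatrix, sub_mul, ← map_mul, hAB, scalar_apply, ← smul_eq_diagonal_mul, sub_smul]
      congr 1
      ext : 1
      simp
    rw [hshift, mul_sub, hcharA, mul_smul_comm, mul_one, ← smul_sub, charmatrix, charmatrix,
      map_add, sub_sub]
  have hdet : A.charpoly * (B + scalar n μ).charpoly =
      (X - C μ) ^ Fintype.card n * (A + B).charpoly := by
    simpa only [det_mul, det_smul, ← charpoly.eq_1] using congrArg det hmatrix
  have hregular : IsLeftRegular ((X - C μ : R[X]) ^ Fintype.card n) :=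
    ((monic_X_sub_C μ).pow _).isRegular.left
  apply hregular
  linear_combination (X - C μ) * (-hdet) +
    A.charpoly * X_sub_C_mul_charpoly_vecMulVec_add_scalar u v μ

end RankOne

section GraphJoin

open SimpleGraph

variable {V W : Type*} (G : SimpleGraph V) (H : SimpleGraph W)

/-- The join `G ∨ H` of two graphs: their disjoint union together with all edges between the two
sides. -/
def graphJoin : SimpleGraph (V ⊕ W) :=
  (G ⊕g H) ⊔ completeBipartiteGraph V W

theorem graphJoin_adj {x y : V ⊕ W} : (graphJoin G H).Adj x y ↔
    (G ⊕g H).Adj x y ∨ (completeBipartiteGraph V W).Adj x y :=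
  Iff.rfl

theorem degree_sum_inl (v : V) [Fintype (G.neighborSet v)]
    [Fintype ((G ⊕g H).neighborSet (.inl v))] :
    (G ⊕g H).degree (.inl v) = G.degree v := by
  have : (G ⊕g H).neighborFinset (.inl v) = (G.neighborFinset v).disjSum ∅ := by
    ext (w | w) <;> simp
  rw [← card_neighborFinset_eq_degree, this, Finset.card_disjSum, card_neighborFinset_eq_degree,
    Finset.card_empty, add_zero]

theorem degree_sum_inr (w : W) [Fintype (H.neighborSet w)]
    [Fintype ((G ⊕g H).neighborSet (.inr w))] :
    (G ⊕g H).degree (.inr w) = H.degree w := by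
  have : (G ⊕g H).neighborFinset (.inr w) = Finset.disjSum ∅ (H.neighborFinset w) := by
    ext (v | v) <;> simp
  rw [← card_neighborFinset_eq_degree, this, Finset.card_disjSum, card_neighborFinset_eq_degree,
    Finset.card_empty, zero_add]

theorem degree_graphJoin_inl [Fintype W] (v : V) [Fintype (G.neighborSet v)]
    [Fintype ((graphJoin G H).neighborSet (.inl v))] :
    (graphJoin G H).degree (.inl v) = G.degree v + Fintype.card W := by
  have : (graphJoin G H).neighborFinset (.inl v) = (G.neighborFinset v).disjSum Finset.univ := by
    ext (w | w) <;> simp [graphJoin_adj]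
  rw [← card_neighborFinset_eq_degree, this, Finset.card_disjSum, card_neighborFinset_eq_degree,
    Finset.card_univ]

theorem degree_graphJoin_inr [Fintype V] (w : W) [Fintype (H.neighborSet w)]
    [Fintype ((graphJoin G H).neighborSet (.inr w))] :
    (graphJoin G H).degree (.inr w) = H.degree w + Fintype.card V := by
  have : (graphJoin G H).neighborFinset (.inr w) = Finset.univ.disjSum (H.neighborFinset w) := by
    ext (v | v) <;> simp [graphJoin_adj]
  rw [← card_neighborFinset_eq_degree, this, Finset.card_disjSum, card_neighborFinset_eq_degree,
    Finset.card_univ, add_comm]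

end GraphJoin

section Laplacian

open SimpleGraph Matrix

variable {V W R : Type*} [Fintype V] [DecidableEq V] [Fintype W] [DecidableEq W] [CommRing R]

theorem lapMatrix_apply (G : SimpleGraph V) [DecidableRel G.Adj] (v w : V) :
    G.lapMatrix R v w = (if v = w then (G.degree v : R) else 0) - if G.Adj v w then 1 else 0 :=
  rfl

theorem lapMat_eq_lapMatrix_s13 (G : SimpleGraph V) [DecidableRel G.Adj] :
    lapMat G = G.lapMatrix ℝ := by
  ext v w
  simp only [lapMat, adjMat, lapMatrix_apply, ← card_neighborFinset_eq_degree,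
    neighborFinset_eq_filter, Matrix.sub_apply, diagonal_apply]
  congr!

theorem charpoly_lapMatrix_congr {G : SimpleGraph V} {H : SimpleGraph W} [DecidableRel G.Adj]
    [DecidableRel H.Adj] (f : G ≃g H) :
    (G.lapMatrix R).charpoly = (H.lapMatrix R).charpoly := by
  have hsubmatrix : (H.lapMatrix R).submatrix f f = G.lapMatrix R := by
    ext v w
    simp only [submatrix_apply, lapMatrix_apply, f.degree_eq, f.map_adj_iff, f.injective.eq_iff]
  rw [← hsubmatrix]
  exact charpoly_reindex f.symm.toEquiv (H.lapMatrix R)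

theorem lapMatrix_top :
    (⊤ : SimpleGraph V).lapMatrix R = vecMulVec (-1) 1 + scalar V (Fintype.card V : R) := by
  ext v w
  have : Nonempty V := ⟨v⟩
  simp only [lapMatrix_apply, Matrix.add_apply, vecMulVec_apply, scalar_apply, diagonal_apply]
  by_cases h : v = w
  · simp [h, Nat.cast_pred Fintype.card_pos, neg_add_eq_sub]
  · simp [h]

theorem X_sub_C_card_mul_charpoly_lapMatrix_top :
    (X - C (Fintype.card V : R)) * ((⊤ : SimpleGraph V).lapMatrix R).charpoly =
      X * (X - C (Fintype.card V : R)) ^ Fintype.card V := by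
  rw [lapMatrix_top, X_sub_C_mul_charpoly_vecMulVec_add_scalar]
  simp

theorem charpoly_lapMatrix_top [Nonempty V] :
    ((⊤ : SimpleGraph V).lapMatrix R).charpoly =
      X * (X - C (Fintype.card V : R)) ^ (Fintype.card V - 1) := by
  apply (monic_X_sub_C (Fintype.card V : R)).isRegular.left
  beta_reduce
  rw [X_sub_C_card_mul_charpoly_lapMatrix_top, mul_left_comm, mul_pow_sub_one Fintype.card_ne_zero]

theorem X_sub_C_mul_charpoly_lapMatrix_add_vecMulVec_one (G : SimpleGraph V)
    [DecidableRel G.Adj] (μ : R) :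
    (X - C μ) * (G.lapMatrix R + scalar V μ + vecMulVec 1 1).charpoly =
      (X - C (μ + Fintype.card V)) * (G.lapMatrix R).charpoly.comp (X - C μ) := by
  have hone : (G.lapMatrix R + scalar V μ) *ᵥ 1 = μ • 1 := by
    have hlap : G.lapMatrix R *ᵥ 1 = 0 := lapMatrix_mulVec_const_eq_zero G
    rw [add_mulVec, hlap, zero_add, scalar_apply, diagonal_const_mulVec]
  rw [X_sub_C_mul_charpoly_add_vecMulVec hone, charpoly_add_scalar, one_dotProduct_one]

variable (G : SimpleGraph V) (H : SimpleGraph W) [DecidableRel G.Adj] [DecidableRel H.Adj]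

section Sum

variable [DecidableRel (G ⊕g H).Adj]

theorem lapMatrix_sum :
    (G ⊕g H).lapMatrix R = fromBlocks (G.lapMatrix R) 0 0 (H.lapMatrix R) := by
  ext (v | v) (w | w) <;> simp [lapMatrix_apply, degree_sum_inl, degree_sum_inr]

theorem charpoly_lapMatrix_sum : ((G ⊕g H).lapMatrix R).charpoly =
    (G.lapMatrix R).charpoly * (H.lapMatrix R).charpoly := by
  rw [lapMatrix_sum, charpoly_fromBlocks_zero₁₂]

end Sum

section Join

variable [DecidableRel (graphJoin G H).Adj]

theorem lapMatrix_graphJoin_add_vecMulVec_one :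
    (graphJoin G H).lapMatrix R + vecMulVec 1 1 =
      fromBlocks (G.lapMatrix R + scalar V (Fintype.card W : R) + vecMulVec 1 1) 0 0
        (H.lapMatrix R + scalar W (Fintype.card V : R) + vecMulVec 1 1) := by
  ext (v | v) (w | w)
  · by_cases h : v = w <;>
      simp [lapMatrix_apply, graphJoin_adj, degree_graphJoin_inl, Matrix.natCast_apply, h]
  · simp [lapMatrix_apply, graphJoin_adj]
  · simp [lapMatrix_apply, graphJoin_adj]
  · by_cases h : v = w <;>
      simp [lapMatrix_apply, graphJoin_adj, degree_graphJoin_inr, Matrix.natCast_apply, h]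

theorem X_sub_C_mul_charpoly_lapMatrix_graphJoin :
    (X - C (Fintype.card V : R)) * (X - C (Fintype.card W : R)) *
        ((graphJoin G H).lapMatrix R).charpoly =
      X * (X - C (Fintype.card V + Fintype.card W : R)) *
        (G.lapMatrix R).charpoly.comp (X - C (Fintype.card W : R)) *
        (H.lapMatrix R).charpoly.comp (X - C (Fintype.card V : R)) := by
  set g := (G.lapMatrix R).charpoly.comp (X - C (Fintype.card W : R))
  set h := (H.lapMatrix R).charpoly.comp (X - C (Fintype.card V : R))
  set g' := (G.lapMatrix R + scalar V (Fintype.card W : R) + vecMulVec 1 1).charpoly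
  set h' := (H.lapMatrix R + scalar W (Fintype.card V : R) + vecMulVec 1 1).charpoly
  have hjoin : X * (g' * h') =
      (X - C (Fintype.card V + Fintype.card W : R)) * ((graphJoin G H).lapMatrix R).charpoly := by
    rw [← charpoly_fromBlocks_zero₁₂ (M₂₁ := 0), ← lapMatrix_graphJoin_add_vecMulVec_one]
    simpa using X_sub_C_mul_charpoly_lapMatrix_add_vecMulVec_one (graphJoin G H) (0 : R)
  have hG : (X - C (Fintype.card W : R)) * g' =
      (X - C (Fintype.card V + Fintype.card W : R)) * g := by
    rw [add_comm]
    exact X_sub_C_mul_charpoly_lapMatrix_add_vecMulVec_one G _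
  have hH : (X - C (Fintype.card V : R)) * h' =
      (X - C (Fintype.card V + Fintype.card W : R)) * h :=
    X_sub_C_mul_charpoly_lapMatrix_add_vecMulVec_one H _
  apply (monic_X_sub_C (Fintype.card V + Fintype.card W : R)).isRegular.left
  linear_combination -(X - C (Fintype.card V : R)) * (X - C (Fintype.card W : R)) * hjoin +
    X * (X - C (Fintype.card V : R)) * h' * hG +
    X * (X - C (Fintype.card V + Fintype.card W : R)) * g * hH

end Join

section CompleteGraph

theorem X_sub_C_card_mul_charpoly_lapMatrix_graphJoin_top (H : SimpleGraph W) [DecidableRel H.Adj]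
    [DecidableRel (graphJoin (⊤ : SimpleGraph V) H).Adj] :
    (X - C (Fintype.card V : R)) * ((graphJoin (⊤ : SimpleGraph V) H).lapMatrix R).charpoly =
      X * (X - C (Fintype.card V + Fintype.card W : R)) ^ Fintype.card V *
        (H.lapMatrix R).charpoly.comp (X - C (Fintype.card V : R)) := by
  have htop : (X - C (Fintype.card V + Fintype.card W : R)) *
      ((⊤ : SimpleGraph V).lapMatrix R).charpoly.comp (X - C (Fintype.card W : R)) =
      (X - C (Fintype.card W : R)) *
        (X - C (Fintype.card V + Fintype.card W : R)) ^ Fintype.card V := by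
    have := congrArg (·.comp (X - C (Fintype.card W : R)))
      (X_sub_C_card_mul_charpoly_lapMatrix_top (V := V) (R := R))
    simpa only [mul_comp, pow_comp, sub_comp, X_comp, C_comp, sub_sub, ← C_add,
      add_comm (Fintype.card W : R)] using this
  apply (monic_X_sub_C (Fintype.card W : R)).isRegular.left
  linear_combination X_sub_C_mul_charpoly_lapMatrix_graphJoin (R := R) (⊤ : SimpleGraph V) H +
    X * (H.lapMatrix R).charpoly.comp (X - C (Fintype.card V : R)) * htop

theorem charpoly_lapMatrix_graphJoin_top_sum_top {U : Type*} [Fintype U] [DecidableEq U]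
    [Nonempty V] [Nonempty W]
    [DecidableRel
      (graphJoin (⊤ : SimpleGraph U) ((⊤ : SimpleGraph V) ⊕g (⊤ : SimpleGraph W))).Adj] :
    ((graphJoin (⊤ : SimpleGraph U) ((⊤ : SimpleGraph V) ⊕g (⊤ : SimpleGraph W))).lapMatrix
        R).charpoly =
      X * (X - C (Fintype.card U : R)) *
        (X - C (Fintype.card U + Fintype.card V : R)) ^ (Fintype.card V - 1) *
        (X - C (Fintype.card U + Fintype.card W : R)) ^ (Fintype.card W - 1) *
        (X - C (Fintype.card U + (Fintype.card V + Fintype.card W) : R)) ^ Fintype.card U := by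
  apply (monic_X_sub_C (Fintype.card U : R)).isRegular.left
  simp only [X_sub_C_card_mul_charpoly_lapMatrix_graphJoin_top, charpoly_lapMatrix_sum,
    charpoly_lapMatrix_top, mul_comp, pow_comp, sub_comp, X_comp, C_comp, sub_sub, ← C_add,
    Fintype.card_sum, Nat.cast_add]
  ring

end CompleteGraph

end Laplacian

section OrderSuper

variable {G : Type*} [Group G] {p q : ℕ}

theorem orderOf_eq_of_commute_of_prime (hprime : ∀ x : G, x ≠ 1 → (orderOf x).Prime) {x y : G}
    (hx : x ≠ 1) (hy : y ≠ 1) (hxy : Commute x y) : orderOf x = orderOf y := by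
  by_contra hne
  have hmul : orderOf (x * y) = orderOf x * orderOf y :=
    hxy.orderOf_mul_eq_mul_orderOf_of_coprime <|
      (Nat.coprime_primes (hprime x hx) (hprime y hy)).mpr hne
  have hxy_ne_one : x * y ≠ 1 := fun h => hx <| orderOf_eq_one_iff.mp <|
    Nat.eq_one_of_mul_eq_one_right (hmul.symm.trans (orderOf_eq_one_iff.mpr h))
  exact Nat.not_prime_mul (hprime x hx).ne_one (hprime y hy).ne_one
    (hmul ▸ hprime (x * y) hxy_ne_one)

theorem orderSuper_adj_iff (hprime : ∀ x : G, x ≠ 1 → (orderOf x).Prime) {x y : G} :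
    (orderSuper G).Adj x y ↔ x ≠ y ∧ (x = 1 ∨ y = 1 ∨ orderOf x = orderOf y) := by
  have hrel {x y : G} : (∃ x' y' : G, x' ≠ y' ∧ x' * y' = y' * x' ∧ orderOf x' = orderOf x ∧
      orderOf y' = orderOf y) → x = 1 ∨ y = 1 ∨ orderOf x = orderOf y := by
    rintro ⟨x', y', -, hcomm, hx, hy⟩
    rw [← orderOf_eq_one_iff, ← orderOf_eq_one_iff (x := y), ← hx, ← hy, orderOf_eq_one_iff,
      orderOf_eq_one_iff]
    by_contra! h
    exact h.2.2 (orderOf_eq_of_commute_of_prime hprime h.1 h.2.1 hcomm)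
  rw [orderSuper, SimpleGraph.fromRel_adj]
  refine and_congr_right fun hne => ⟨?_, ?_⟩
  · rintro ((h | h) | (h | h))
    · exact .inr (.inr h)
    · exact hrel h
    · exact .inr (.inr h.symm)
    · obtain hy | hx | h := hrel h
      exacts [.inr (.inl hy), .inl hx, .inr (.inr h.symm)]
  · rintro (rfl | rfl | h)
    · exact .inl (.inr ⟨1, y, hne, by simp, rfl, rfl⟩)
    · exact .inl (.inr ⟨x, 1, hne, by simp, rfl, rfl⟩)
    · exact .inl (.inl h)

theorem bijective_sumElim_orderOf (hp : p ≠ 1) (hq : q ≠ 1) (hpq : p ≠ q)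
    (horder : ∀ x : G, x ≠ 1 → orderOf x = p ∨ orderOf x = q) :
    Function.Bijective (Sum.elim (fun _ => 1) (Sum.elim (↑) (↑)) :
      Unit ⊕ ({x : G // orderOf x = p} ⊕ {x : G // orderOf x = q}) → G) := by
  constructor
  · refine (Function.injective_of_subsingleton _).sumElim
      (Subtype.val_injective.sumElim Subtype.val_injective fun x y => ?_) ?_
    · exact ne_of_apply_ne orderOf (by rwa [x.2, y.2])
    · rintro - (x | x) <;> refine ne_of_apply_ne orderOf ?_
      exacts [by simpa [x.2] using hp.symm, by simpa [x.2] using hq.symm]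
  · intro x
    by_cases hx : x = 1
    · exact ⟨.inl (), hx.symm⟩
    · rcases horder x hx with h | h
      exacts [⟨.inr (.inl ⟨x, h⟩), rfl⟩, ⟨.inr (.inr ⟨x, h⟩), rfl⟩]

theorem natCard_eq_one_add_natCard_orderOf [Finite G] (hp : p ≠ 1) (hq : q ≠ 1) (hpq : p ≠ q)
    (horder : ∀ x : G, x ≠ 1 → orderOf x = p ∨ orderOf x = q) :
    Nat.card G = 1 + (Nat.card {x : G // orderOf x = p} + Nat.card {x : G // orderOf x = q}) := by
  rw [← Nat.card_congr (Equiv.ofBijective _ (bijective_sumElim_orderOf hp hq hpq horder)),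
    Nat.card_sum, Nat.card_sum, Nat.card_unique]

theorem nonempty_graphJoin_iso_orderSuper (hp : p.Prime) (hq : q.Prime) (hpq : p ≠ q)
    (horder : ∀ x : G, x ≠ 1 → orderOf x = p ∨ orderOf x = q) :
    Nonempty (graphJoin (⊤ : SimpleGraph Unit) ((⊤ : SimpleGraph {x : G // orderOf x = p}) ⊕g
      (⊤ : SimpleGraph {x : G // orderOf x = q})) ≃g orderSuper G) := by
  have hprime (x : G) (hx : x ≠ 1) : (orderOf x).Prime := by
    rcases horder x hx with h | h <;> rwa [h]
  have hbij := bijective_sumElim_orderOf hp.ne_one hq.ne_one hpq horder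
  refine ⟨⟨Equiv.ofBijective _ hbij, fun {u v} => ?_⟩⟩
  rw [Equiv.ofBijective_apply, Equiv.ofBijective_apply, orderSuper_adj_iff hprime,
    hbij.injective.ne_iff]
  rcases u with _ | ⟨x, hx⟩ | ⟨x, hx⟩ <;> rcases v with _ | ⟨y, hy⟩ | ⟨y, hy⟩ <;>
    simp [graphJoin_adj, ← orderOf_eq_one_iff, hp.ne_one, hq.ne_one, hpq.symm, *]

theorem charpoly_lapMat_orderSuper [Fintype G] (hp : p.Prime) (hq : q.Prime) (hpq : p ≠ q)
    (hpG : p ∣ Nat.card G) (hqG : q ∣ Nat.card G)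
    (horder : ∀ x : G, x ≠ 1 → orderOf x = p ∨ orderOf x = q) :
    (lapMat (orderSuper G)).charpoly =
      X * (X - 1) * (X - C (1 + Nat.card {x : G // orderOf x = p} : ℝ)) ^
          (Nat.card {x : G // orderOf x = p} - 1) *
        (X - C (1 + Nat.card {x : G // orderOf x = q} : ℝ)) ^
          (Nat.card {x : G // orderOf x = q} - 1) *
        (X - C (Nat.card G : ℝ)) := by
  obtain ⟨f⟩ := nonempty_graphJoin_iso_orderSuper hp hq hpq horder
  have : Fact p.Prime := ⟨hp⟩
  have : Fact q.Prime := ⟨hq⟩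
  have : Nonempty {x : G // orderOf x = p} :=
    nonempty_subtype.mpr (exists_prime_orderOf_dvd_card' p hpG)
  have : Nonempty {x : G // orderOf x = q} :=
    nonempty_subtype.mpr (exists_prime_orderOf_dvd_card' q hqG)
  rw [lapMat_eq_lapMatrix_s13, ← charpoly_lapMatrix_congr f, charpoly_lapMatrix_graphJoin_top_sum_top,
    ← Nat.card_congr f.toEquiv]
  simp

end OrderSuper

section OrderCount

variable {G : Type*} [Group G] {p q : ℕ}

theorem orderOf_eq_or_eq_of_natCard_eq_mul (hp : p.Prime) (hq : q.Prime)
    (hcard : Nat.card G = p * q) (hnab : ∃ x y : G, x * y ≠ y * x) {x : G} (hx : x ≠ 1) :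
    orderOf x = p ∨ orderOf x = q := by
  have : Finite G := Nat.finite_of_card_ne_zero (hcard ▸ mul_ne_zero hp.ne_zero hq.ne_zero)
  have hne_card : orderOf x ≠ p * q := fun h => by
    have := isCyclic_of_orderOf_eq_card x (h.trans hcard.symm)
    obtain ⟨y, z, hyz⟩ := hnab
    exact hyz (IsCyclic.commGroup.mul_comm y z)
  obtain ⟨d, e, hd, he, hde⟩ := exists_dvd_and_dvd_of_dvd_mul (hcard ▸ orderOf_dvd_natCard x)
  have hne_one : orderOf x ≠ 1 := mt orderOf_eq_one_iff.mp hx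
  rcases (Nat.dvd_prime hp).mp hd with rfl | rfl <;>
    rcases (Nat.dvd_prime hq).mp he with rfl | rfl <;> simp_all

theorem subsingleton_sylow_of_index_lt [Fact p.Prime] (P : Sylow p G)
    [(P : Subgroup G).FiniteIndex] (hindex : (P : Subgroup G).index < p) :
    Subsingleton (Sylow p G) := by
  have := P.finite_of_finiteIndex
  have hlt : Nat.card (Sylow p G) < p :=
    (Nat.le_of_dvd (Nat.pos_of_ne_zero Subgroup.FiniteIndex.index_ne_zero)
      P.card_dvd_index).trans_lt hindex
  have hone : Nat.card (Sylow p G) = 1 :=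
    (card_sylow_modEq_one p G).eq_of_lt_of_lt hlt (Fact.out : p.Prime).one_lt
  exact (Nat.card_eq_one_iff_unique.mp hone).1

theorem natCard_orderOf_eq_prime_of_subsingleton_sylow [Fact p.Prime] [Subsingleton (Sylow p G)]
    (P : Sylow p G) (hP : Nat.card P = p) : Nat.card {x : G // orderOf x = p} = p - 1 := by
  have hset : {x : G | orderOf x = p} = (P : Set G) \ {1} := by
    ext x
    rw [Set.mem_ofPred_eq, orderOf_eq_prime_iff]
    refine and_congr_left fun hx1 => ⟨fun hx => ?_, fun hx => ?_⟩
    · have hzpowers : IsPGroup p (Subgroup.zpowers x) := IsPGroup.of_card (n := 1) <| by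
        rw [Nat.card_zpowers, orderOf_eq_prime hx hx1, pow_one]
      obtain ⟨Q, hQ⟩ := hzpowers.exists_le_sylow
      exact Subsingleton.elim Q P ▸ hQ (Subgroup.mem_zpowers x)
    · exact orderOf_dvd_iff_pow_eq_one.mp (hP ▸ Subgroup.orderOf_dvd_natCard (P : Subgroup G) hx)
  calc Nat.card {x : G // orderOf x = p} = ((P : Set G) \ {1}).ncard := by rw [← hset]; rfl
    _ = (P : Set G).ncard - 1 := Set.ncard_sdiff_singleton_of_mem P.one_mem
    _ = p - 1 := congrArg (· - 1) hP

theorem natCard_orderOf_eq_prime [Fact p.Prime] {m : ℕ} (hcard : Nat.card G = p * m)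
    (hm0 : m ≠ 0) (hmp : m < p) : Nat.card {x : G // orderOf x = p} = p - 1 := by
  have hp : p.Prime := Fact.out
  have : Finite G := Nat.finite_of_card_ne_zero (hcard ▸ mul_ne_zero hp.ne_zero hm0)
  let P : Sylow p G := default
  have hP : Nat.card P = p := by
    rw [P.card_eq_multiplicity, hcard, Nat.factorization_mul hp.ne_zero hm0, Finsupp.add_apply,
      hp.factorization_self, Nat.factorization_eq_zero_of_lt hmp, add_zero, pow_one]
  have hindex : (P : Subgroup G).index = m :=
    Nat.eq_of_mul_eq_mul_left hp.pos <| by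
      rw [← hcard, ← (P : Subgroup G).card_mul_index]
      exact congrArg (· * _) hP.symm
  have := subsingleton_sylow_of_index_lt P (hindex.trans_lt hmp)
  exact natCard_orderOf_eq_prime_of_subsingleton_sylow P hP

end OrderCount

/-- Laplacian spectrum of the order super commuting graph of a nonabelian group of order
`pq`, where `p, q` are distinct primes with `q ∣ p − 1`: the Laplacian eigenvalues are
exactly `0, 1, p, pq−p+1, pq` with multiplicities `1, 1, p−2, pq−p−1, 1`, i.e.
`χ(L(Δ^o(G)), x) = x (x−1) (x−p)^{p−2} (x−(pq−p+1))^{pq−p−1} (x−pq)`. -/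
theorem stmt_13 (p q : ℕ) (hp : p.Prime) (hq : q.Prime) (hpq : p ≠ q) (hdvd : q ∣ p - 1)
    (G : Type*) [Group G] [Fintype G] (hcard : Fintype.card G = p * q)
    (hnab : ∃ x y : G, x * y ≠ y * x) :
    (lapMat (orderSuper G)).charpoly =
      X * (X - 1) * (X - C (p : ℝ)) ^ (p - 2) *
        (X - C ((p : ℝ) * q - p + 1)) ^ (p * q - p - 1) * (X - C ((p : ℝ) * q)) := by
  have : Fact p.Prime := ⟨hp⟩
  have hN : Nat.card G = p * q := Nat.card_eq_fintype_card.trans hcard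
  have hqp : q < p := by
    have := Nat.le_of_dvd (Nat.sub_pos_of_lt hp.one_lt) hdvd
    omega
  have horder (x : G) (hx : x ≠ 1) : orderOf x = p ∨ orderOf x = q :=
    orderOf_eq_or_eq_of_natCard_eq_mul hp hq hN hnab hx
  have hcard_p : Nat.card {x : G // orderOf x = p} = p - 1 :=
    natCard_orderOf_eq_prime hN hq.ne_zero hqp
  have hcard_q : Nat.card {x : G // orderOf x = q} = p * q - p := by
    have := natCard_eq_one_add_natCard_orderOf hp.ne_one hq.ne_one hpq horder
    have := hp.pos
    omega
  rw [charpoly_lapMat_orderSuper hp hq hpq (hN ▸ dvd_mul_right p q) (hN ▸ dvd_mul_left q p) horder,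
    hcard_p, hcard_q, hN, Nat.sub_sub p, Nat.cast_sub (Nat.le_mul_of_pos_right p hq.pos),
    Nat.cast_sub hp.one_le]
  push_cast
  rw [add_sub_cancel, add_comm (1 : ℝ)]
end
end
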